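/- arXiv:1704.03244 — 2 statements merged into one kernel-verified Lean document; each statement's English description precedes it below -/
import Mathlib

section
/- Let W = (W_t)_{t≥0} be a standard one-dimensional Brownian motion on a probability space (Ω, F, P). For every fixed t > 0 and every level a ∈ ℝ, the limit L_t(a) := lim_{ε→0+} (1/(2ε)) · λ{ s ∈ [0,t] : |W_s − a| ≤ ε } exists almost surely and defines a nonnegative, almost surely finite random variable (the Brownian local time of W at level a up to time t). -/
/-!
Let `A ε` be the occupation time of `[a - ε, a + ε]` before time `t`, divided by `2 * ε`. For
`s < u` the increment `W u - W s` is independent of `W s`, and its Gaussian density is bounded by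
`(u - s) ^ (-1/2)` and Lipschitz with constant `(u - s)⁻¹`, hence `1/2`-Hölder with constant
`(u - s) ^ (-3/4)`. Integrating the difference of two uniform densities, of half-widths `ε` and `δ`,
against it thus gives at most `(u - s) ^ (-3/4) * |ε - δ| ^ (1/2)`, while the density of `W s`
contributes a factor `2 * s ^ (-1/2)`. The product of these bounds is integrable over
`0 < s < u < t`, so the second moment of `A ε - A δ` is at most a constant times
`|ε - δ| ^ (1/2)`. Consequently `A` converges almost surely along a sequence `ε n → 0` of fast
enough polynomial decay. The occupation time is monotone in `ε` and `ε (n + 1) / ε n → 1`, so a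
sandwich between consecutive terms gives convergence as `ε → 0`.
-/

open MeasureTheory ProbabilityTheory Filter Set
open scoped ENNReal NNReal

/-- `W` is a standard one-dimensional Brownian motion on `(Ω, F, P)`:
`W 0 = 0`, measurable coordinates, a.s. continuous paths, Gaussian increments
`W t - W s ~ N(0, t - s)` and independent increments. -/
structure IsBrownianMotion {Ω : Type*} [MeasurableSpace Ω] (P : Measure Ω)
    (W : ℝ → Ω → ℝ) : Prop where
  isProb : IsProbabilityMeasure P
  init : ∀ ω, W 0 ω = 0
  meas : ∀ t, Measurable (W t)
  cont : ∀ᵐ ω ∂P, Continuous fun t => W t ω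
  incr_law : ∀ s t : ℝ, 0 ≤ s → s ≤ t →
    Measure.map (fun ω => W t ω - W s ω) P = gaussianReal 0 (Real.toNNReal (t - s))
  indep_incr : ∀ (n : ℕ) (t : Fin (n + 1) → ℝ), Monotone t → 0 ≤ t 0 →
    iIndepFun
      (fun i : Fin n => fun ω => W (t i.succ) ω - W (t i.castSucc) ω) P

section GaussianDensity

lemma inv_sqrt_two_pi_mul_le {v : ℝ} (hv : 0 < v) : (√(2 * Real.pi * v))⁻¹ ≤ (√v)⁻¹ := by
  gcongr
  nlinarith [Real.pi_gt_three]

lemma gaussianPDFReal_le_rpow (m : ℝ) {v : ℝ≥0} (hv : v ≠ 0) (x : ℝ) :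
    gaussianPDFReal m v x ≤ (v : ℝ) ^ (-(1 / 2) : ℝ) := by
  have hv : 0 < (v : ℝ) := by positivity
  rw [Real.rpow_neg hv.le, ← Real.sqrt_eq_rpow, ← mul_one (√(v : ℝ))⁻¹, gaussianPDFReal]
  gcongr ?_ * ?_
  · exact inv_sqrt_two_pi_mul_le hv
  · rw [Real.exp_le_one_iff, neg_div]
    exact neg_nonpos.2 (by positivity)

lemma gaussianReal_le_smul_volume (m : ℝ) {v : ℝ≥0} (hv : v ≠ 0) :
    gaussianReal m v ≤ (v ^ (-(1 / 2) : ℝ) : ℝ≥0) • volume := by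
  change _ ≤ ((v ^ (-(1 / 2) : ℝ) : ℝ≥0) : ℝ≥0∞) • (volume : Measure ℝ)
  rw [gaussianReal_of_var_ne_zero m hv, ← withDensity_const]
  refine withDensity_mono (ae_of_all _ fun x ↦ ?_)
  rw [gaussianPDF, ENNReal.ofReal_le_iff_le_toReal ENNReal.coe_ne_top]
  exact gaussianPDFReal_le_rpow m hv x

lemma hasDerivAt_gaussianPDFReal (m : ℝ) (v : ℝ≥0) (x : ℝ) :
    HasDerivAt (gaussianPDFReal m v) (-((x - m) / v) * gaussianPDFReal m v x) x := by
  have hexponent : HasDerivAt (fun y : ℝ ↦ -(y - m) ^ 2 / (2 * v)) (-((x - m) / v)) x :=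
    ((((hasDerivAt_id x).sub_const m).pow 2).neg.div_const (2 * (v : ℝ))).congr_deriv (by
      simp only [id_eq]
      ring)
  refine (hexponent.exp.const_mul (√(2 * Real.pi * v))⁻¹).congr_deriv ?_
  rw [gaussianPDFReal]
  ring

lemma abs_le_sqrt_mul_exp_sq_div {v : ℝ} (hv : 0 < v) (y : ℝ) :
    |y| ≤ √v * Real.exp (y ^ 2 / (2 * v)) := by
  refine abs_le_of_sq_le_sq ?_ (by positivity)
  have hexp : y ^ 2 / v ≤ Real.exp (y ^ 2 / v) := by linarith [Real.add_one_le_exp (y ^ 2 / v)]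
  calc y ^ 2 = v * (y ^ 2 / v) := by field_simp
    _ ≤ v * Real.exp (y ^ 2 / v) := by gcongr
    _ = (√v * Real.exp (y ^ 2 / (2 * v))) ^ 2 := by
      rw [mul_pow, Real.sq_sqrt hv.le, ← Real.exp_nat_mul]
      congr 2
      push_cast
      field_simp

lemma lipschitzWith_gaussianPDFReal (m : ℝ) {v : ℝ≥0} (hv : v ≠ 0) :
    LipschitzWith v⁻¹ (gaussianPDFReal m v) := by
  have hv : 0 < (v : ℝ) := by positivity
  refine lipschitzWith_of_nnnorm_deriv_le
    (fun x ↦ (hasDerivAt_gaussianPDFReal m v x).differentiableAt) fun x ↦ ?_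
  rw [(hasDerivAt_gaussianPDFReal m v x).deriv, ← NNReal.coe_le_coe, coe_nnnorm, NNReal.coe_inv,
    norm_mul, norm_neg, norm_div, Real.norm_of_nonneg (gaussianPDFReal_nonneg m v x),
    Real.norm_of_nonneg hv.le, Real.norm_eq_abs, gaussianPDFReal, neg_div, Real.exp_neg]
  calc |x - m| / v * ((√(2 * Real.pi * v))⁻¹ * (Real.exp ((x - m) ^ 2 / (2 * v)))⁻¹)
      ≤ √v * Real.exp ((x - m) ^ 2 / (2 * v)) / v *
          ((√v)⁻¹ * (Real.exp ((x - m) ^ 2 / (2 * v)))⁻¹) := by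
        gcongr ?_ / _ * (?_ * _)
        · exact abs_le_sqrt_mul_exp_sq_div hv _
        · exact inv_sqrt_two_pi_mul_le hv
    _ = (v : ℝ)⁻¹ := by field_simp

lemma holderWith_gaussianPDFReal (m : ℝ) {v : ℝ≥0} (hv : v ≠ 0) {α : ℝ≥0} (hα : α ≤ 1) :
    HolderWith (v ^ (-((1 + α) / 2) : ℝ)) α (gaussianPDFReal m v) := by
  have hbounded : HolderWith (v ^ (-(1 / 2) : ℝ)) 0 (gaussianPDFReal m v) := fun x y ↦ by
    rw [NNReal.coe_zero, ENNReal.rpow_zero, mul_one, edist_dist, Real.dist_eq,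
      ENNReal.ofReal_le_iff_le_toReal ENNReal.coe_ne_top]
    exact abs_sub_le_of_nonneg_of_le (gaussianPDFReal_nonneg m v x)
      (gaussianPDFReal_le_rpow m hv x) (gaussianPDFReal_nonneg m v y)
      (gaussianPDFReal_le_rpow m hv y)
  have h := hbounded.interpolate (lipschitzWith_gaussianPDFReal m hv).holderWith
    (tsub_add_cancel_of_le hα)
  rw [zero_mul, one_mul, zero_add, ← NNReal.rpow_neg_one, ← NNReal.rpow_mul, ← NNReal.rpow_mul,
    ← NNReal.rpow_add hv, NNReal.coe_sub hα, NNReal.coe_one] at h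
  convert h using 2
  ring

end GaussianDensity

section BoxKernel

/-- For `ε > 0`, the density of the uniform distribution on `[a - ε, a + ε]`: an approximation of
the Dirac mass at `a` whose integral along a path is the normalized occupation time of that
interval. -/
noncomputable def boxKernel (a ε : ℝ) : ℝ → ℝ :=
  (Metric.closedBall a ε).indicator fun _ ↦ 1 / (2 * ε)

variable {a ε δ : ℝ}

lemma measurable_boxKernel (a ε : ℝ) : Measurable (boxKernel a ε) :=
  measurable_const.indicator measurableSet_closedBall

lemma boxKernel_nonneg (hε : 0 < ε) (x : ℝ) : 0 ≤ boxKernel a ε x :=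
  indicator_nonneg (fun _ _ ↦ by positivity) x

lemma boxKernel_le (hε : 0 < ε) (x : ℝ) : boxKernel a ε x ≤ 1 / (2 * ε) :=
  indicator_le_self' (f := fun _ ↦ 1 / (2 * ε)) (fun _ _ ↦ by positivity) x

lemma boxKernel_add (a ε x z : ℝ) : boxKernel a ε (x + z) = boxKernel (a - x) ε z := by
  simp only [boxKernel, indicator, Metric.mem_closedBall, Real.dist_eq]
  congr 3
  ring

lemma integral_boxKernel_mul (hε : 0 < ε) (q : ℝ → ℝ) :
    ∫ z, q z * boxKernel a ε z = (1 / 2) * ∫ v in (-1 : ℝ)..1, q (ε * v + a) := by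
  have hindicator : (fun z ↦ q z * boxKernel a ε z) =
      (Icc (a - ε) (a + ε)).indicator fun z ↦ q z * (1 / (2 * ε)) := by
    rw [← Real.closedBall_eq_Icc]
    exact funext fun z ↦ (indicator_mul_right _ q _).symm
  rw [hindicator, integral_indicator measurableSet_Icc, integral_Icc_eq_integral_Ioc,
    ← intervalIntegral.integral_of_le (by linarith), intervalIntegral.integral_mul_const,
    intervalIntegral.integral_comp_mul_add _ hε.ne', smul_eq_mul, mul_neg_one, mul_one,
    neg_add_eq_sub, add_comm ε a]
  field_simp

lemma integrable_boxKernel_comp {T : Type*} [MeasurableSpace T] {μ : Measure T} [IsFiniteMeasure μ]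
    {f : T → ℝ} (hf : AEMeasurable f μ) (hε : 0 < ε) :
    Integrable (fun s ↦ boxKernel a ε (f s)) μ := by
  refine .of_bound ((measurable_boxKernel a ε).comp_aemeasurable hf).aestronglyMeasurable
    (1 / (2 * ε)) (ae_of_all _ fun s ↦ ?_)
  rw [Real.norm_of_nonneg (boxKernel_nonneg hε _)]
  exact boxKernel_le hε _

lemma integrable_boxKernel {ρ : Measure ℝ} [IsFiniteMeasure ρ] (hε : 0 < ε) :
    Integrable (boxKernel a ε) ρ :=
  integrable_boxKernel_comp aemeasurable_id hε

lemma integral_boxKernel_volume (hε : 0 < ε) : ∫ z, boxKernel a ε z = 1 := by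
  simpa [one_add_one_eq_two] using integral_boxKernel_mul (a := a) hε fun _ ↦ 1

lemma integral_boxKernel_le_of_le_smul_volume {ρ : Measure ℝ} {M : ℝ≥0} (hρ : ρ ≤ M • volume)
    (hε : 0 < ε) : ∫ z, boxKernel a ε z ∂ρ ≤ M := by
  have hvol : Integrable (boxKernel a ε) volume :=
    .of_integral_ne_zero (by simp [integral_boxKernel_volume hε])
  calc ∫ z, boxKernel a ε z ∂ρ ≤ ∫ z, boxKernel a ε z ∂(M • volume) :=
        integral_mono_measure hρ (ae_of_all _ fun _ ↦ boxKernel_nonneg hε _)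
          hvol.smul_measure_nnreal
    _ = M := by rw [integral_smul_nnreal_measure, integral_boxKernel_volume hε, NNReal.smul_def,
        smul_eq_mul, mul_one]

lemma abs_integral_mul_boxKernel_sub_le {q : ℝ → ℝ} {H α : ℝ≥0} (hq : HolderWith H α q) (hα : 0 < α)
    (hε : 0 < ε) (hδ : 0 < δ) :
    |(∫ z, q z * boxKernel a ε z) - ∫ z, q z * boxKernel a δ z| ≤ H * |ε - δ| ^ (α : ℝ) := by
  have hcont := hq.continuous hα
  have hpoint : ∀ v ∈ uIoc (-1 : ℝ) 1,
      ‖q (ε * v + a) - q (δ * v + a)‖ ≤ H * |ε - δ| ^ (α : ℝ) := fun v hv ↦ by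
    rw [uIoc_of_le (by norm_num)] at hv
    refine hq.dist_le_of_le ?_
    rw [Real.dist_eq, show ε * v + a - (δ * v + a) = (ε - δ) * v by ring, abs_mul]
    exact mul_le_of_le_one_right (abs_nonneg _) (abs_le.2 ⟨hv.1.le, hv.2⟩)
  rw [integral_boxKernel_mul hε, integral_boxKernel_mul hδ, ← mul_sub,
    ← intervalIntegral.integral_sub
      ((by fun_prop : Continuous fun v ↦ q (ε * v + a)).intervalIntegrable _ _)
      ((by fun_prop : Continuous fun v ↦ q (δ * v + a)).intervalIntegrable _ _), abs_mul,
    abs_of_pos one_half_pos]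
  calc 1 / 2 * |∫ v in (-1 : ℝ)..1, q (ε * v + a) - q (δ * v + a)|
      ≤ 1 / 2 * (H * |ε - δ| ^ (α : ℝ) * |1 - (-1)|) := by
        gcongr
        exact intervalIntegral.norm_integral_le_of_norm_le_const hpoint
    _ = H * |ε - δ| ^ (α : ℝ) := by norm_num; ring

end BoxKernel

section TwoPointBound

variable {Ω : Type*} [MeasurableSpace Ω] {P : Measure Ω}

lemma abs_integral_mul_comp_add_le {G : Type*} [AddZeroClass G] [MeasurableSpace G]
    {ρ ν : Measure G} [SFinite ρ] [SFinite ν] {f g : G → ℝ} {B : ℝ} (hf : Integrable f ρ)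
    (hg : ∀ x, |∫ z, g (x + z) ∂ν| ≤ B) :
    |∫ p, f p.1 * g (p.1 + p.2) ∂ρ.prod ν| ≤ (∫ x, |f x| ∂ρ) * B := by
  have hB : 0 ≤ B := (abs_nonneg _).trans (hg 0)
  by_cases hint : Integrable (fun p : G × G ↦ f p.1 * g (p.1 + p.2)) (ρ.prod ν)
  · rw [integral_prod _ hint, ← integral_mul_const, ← Real.norm_eq_abs]
    refine norm_integral_le_of_norm_le (hf.abs.mul_const B) (ae_of_all _ fun x ↦ ?_)
    dsimp only
    rw [integral_const_mul, norm_mul, Real.norm_eq_abs, Real.norm_eq_abs]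
    gcongr
    exact hg x
  · rw [integral_undef hint, abs_zero]
    positivity

lemma integral_abs_boxKernel_sub_le {ρ : Measure ℝ} [IsFiniteMeasure ρ] {M : ℝ≥0}
    (hρ : ρ ≤ M • volume) (a : ℝ) {ε δ : ℝ} (hε : 0 < ε) (hδ : 0 < δ) :
    ∫ x, |boxKernel a ε x - boxKernel a δ x| ∂ρ ≤ 2 * M := by
  have hint {η : ℝ} (hη : 0 < η) : Integrable (boxKernel a η) ρ := integrable_boxKernel hη
  calc ∫ x, |boxKernel a ε x - boxKernel a δ x| ∂ρ
      ≤ ∫ x, boxKernel a ε x + boxKernel a δ x ∂ρ := by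
        refine integral_mono ((hint hε).sub (hint hδ)).abs ((hint hε).add (hint hδ)) fun x ↦ ?_
        exact (abs_sub _ _).trans_eq (by
          rw [abs_of_nonneg (boxKernel_nonneg hε x), abs_of_nonneg (boxKernel_nonneg hδ x)])
    _ = ∫ x, boxKernel a ε x ∂ρ + ∫ x, boxKernel a δ x ∂ρ := integral_add (hint hε) (hint hδ)
    _ ≤ 2 * M := by
      linarith [integral_boxKernel_le_of_le_smul_volume (a := a) hρ hε,
        integral_boxKernel_le_of_le_smul_volume (a := a) hρ hδ]

lemma abs_integral_boxKernel_sub_gaussianReal_le (m : ℝ) {v : ℝ≥0} (hv : v ≠ 0) {α : ℝ≥0}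
    (hα : 0 < α) (hα1 : α ≤ 1) (a : ℝ) {ε δ : ℝ} (hε : 0 < ε) (hδ : 0 < δ) :
    |∫ z, (boxKernel a ε z - boxKernel a δ z) ∂gaussianReal m v| ≤
      (v : ℝ) ^ (-((1 + α) / 2) : ℝ) * |ε - δ| ^ (α : ℝ) := by
  rw [integral_sub (integrable_boxKernel hε)
    (integrable_boxKernel hδ), integral_gaussianReal_eq_integral_smul hv,
    integral_gaussianReal_eq_integral_smul hv]
  exact_mod_cast abs_integral_mul_boxKernel_sub_le (holderWith_gaussianPDFReal m hv hα1) hα hε hδ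

lemma abs_integral_boxKernel_sub_mul_le {X Y : Ω → ℝ} {m n : ℝ} {v w : ℝ≥0} (hv : v ≠ 0)
    (hw : w ≠ 0) (hXY : HasLaw (fun ω ↦ (X ω, Y ω - X ω))
      ((gaussianReal m v).prod (gaussianReal n w)) P)
    {α : ℝ≥0} (hα : 0 < α) (hα1 : α ≤ 1) (a : ℝ) {ε δ : ℝ} (hε : 0 < ε) (hδ : 0 < δ) :
    |∫ ω, (boxKernel a ε (X ω) - boxKernel a δ (X ω)) *
        (boxKernel a ε (Y ω) - boxKernel a δ (Y ω)) ∂P| ≤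
      2 * |ε - δ| ^ (α : ℝ) * ((w : ℝ) ^ (-((1 + α) / 2) : ℝ) * (v : ℝ) ^ (-(1 / 2) : ℝ)) := by
  let f : ℝ → ℝ := fun x ↦ boxKernel a ε x - boxKernel a δ x
  have hf : Measurable f := (measurable_boxKernel a ε).sub (measurable_boxKernel a δ)
  have hlaw : ∫ ω, f (X ω) * f (Y ω) ∂P =
      ∫ p, f p.1 * f (p.1 + p.2) ∂(gaussianReal m v).prod (gaussianReal n w) := by
    rw [← hXY.integral_comp (by fun_prop)]
    simp
  have hincrement (x : ℝ) : |∫ z, f (x + z) ∂gaussianReal n w| ≤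
      (w : ℝ) ^ (-((1 + α) / 2) : ℝ) * |ε - δ| ^ (α : ℝ) := by
    simp only [f, boxKernel_add]
    exact abs_integral_boxKernel_sub_gaussianReal_le n hw hα hα1 (a - x) hε hδ
  calc |∫ ω, f (X ω) * f (Y ω) ∂P|
      ≤ (∫ x, |f x| ∂gaussianReal m v) *
          ((w : ℝ) ^ (-((1 + α) / 2) : ℝ) * |ε - δ| ^ (α : ℝ)) := by
        rw [hlaw]
        exact abs_integral_mul_comp_add_le ((integrable_boxKernel hε).sub
          (integrable_boxKernel hδ)) hincrement
    _ ≤ 2 * (v : ℝ) ^ (-(1 / 2) : ℝ) *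
          ((w : ℝ) ^ (-((1 + α) / 2) : ℝ) * |ε - δ| ^ (α : ℝ)) := by
        gcongr
        exact_mod_cast integral_abs_boxKernel_sub_le (gaussianReal_le_smul_volume m hv) a hε hδ
    _ = _ := by ring

lemma integrableOn_abs_sub_rpow_mul_min_rpow {b c : ℝ} (hb : -1 < b) (hc : -1 < c) (t : ℝ) :
    IntegrableOn (fun p : ℝ × ℝ ↦ |p.2 - p.1| ^ b * (min p.1 p.2) ^ c)
      (Icc 0 t ×ˢ Icc 0 t) := by
  -- On each side of the diagonal this is the integrand of a convolution of truncated powers.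
  let g (r : ℝ) : ℝ → ℝ := (Icc 0 t).indicator (· ^ r)
  have hg {r : ℝ} (hr : -1 < r) : Integrable (g r) := by
    rcases le_or_gt 0 t with ht | ht
    · rw [integrable_indicator_iff measurableSet_Icc, integrableOn_Icc_iff_integrableOn_Ioc,
        ← intervalIntegrable_iff_integrableOn_Ioc_of_le ht]
      exact intervalIntegral.intervalIntegrable_rpow' hr
    · simp [g, Icc_eq_empty_of_lt ht]
  have hg0 (r x : ℝ) : 0 ≤ g r x := indicator_nonneg (fun y hy ↦ Real.rpow_nonneg hy.1 r) x
  have hgt : Integrable fun p : ℝ × ℝ ↦ g c p.2 * g b (p.1 - p.2) :=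
    (hg hc).convolution_integrand (ContinuousLinearMap.mul ℝ ℝ) (hg hb)
  have hlt : Integrable fun p : ℝ × ℝ ↦ g c p.1 * g b (p.2 - p.1) := hgt.swap
  refine Integrable.mono' (hlt.add hgt).integrableOn (by fun_prop) ?_
  refine (ae_restrict_iff' (measurableSet_Icc.prod measurableSet_Icc)).2
    (ae_of_all _ fun p ⟨hp1, hp2⟩ ↦ ?_)
  rw [Real.norm_of_nonneg (mul_nonneg (by positivity) (Real.rpow_nonneg (le_min hp1.1 hp2.1) c))]
  rcases le_total p.1 p.2 with h | h
  · have hdiff : p.2 - p.1 ∈ Icc 0 t := ⟨sub_nonneg.2 h, by linarith [hp1.1, hp2.2]⟩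
    rw [min_eq_left h, abs_of_nonneg hdiff.1, mul_comm]
    refine le_add_of_le_of_nonneg (le_of_eq ?_) (mul_nonneg (hg0 _ _) (hg0 _ _))
    simp only [g, indicator_of_mem hp1, indicator_of_mem hdiff]
  · have hdiff : p.1 - p.2 ∈ Icc 0 t := ⟨sub_nonneg.2 h, by linarith [hp2.1, hp1.2]⟩
    rw [min_eq_right h, abs_sub_comm, abs_of_nonneg hdiff.1, mul_comm]
    refine le_add_of_nonneg_of_le (mul_nonneg (hg0 _ _) (hg0 _ _)) (le_of_eq ?_)
    simp only [g, indicator_of_mem hp2, indicator_of_mem hdiff]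

end TwoPointBound

section LimitAlongSequence

variable {Ω : Type*} [MeasurableSpace Ω] {P : Measure Ω}

lemma eventually_nhdsGT_zero_exists_mem_Icc_of_antitone {u : ℕ → ℝ} (hu0 : ∀ n, 0 < u n)
    (hu : Antitone u) (hulim : Tendsto u atTop (nhds 0)) {p : ℕ → Prop} (hp : ∀ᶠ n in atTop, p n) :
    ∀ᶠ ε in nhdsWithin 0 (Ioi 0), ∃ n, p n ∧ ε ∈ Icc (u (n + 1)) (u n) := by
  obtain ⟨k, hk⟩ := eventually_atTop.1 hp
  filter_upwards [Ioc_mem_nhdsGT (hu0 k)] with ε hε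
  have hbelow : ∃ n, u n < ε := (hulim.eventually_lt_const hε.1).exists
  classical
  have hfind : k < Nat.find hbelow :=
    (Nat.lt_find_iff hbelow k).2 fun j hj ↦ not_lt.2 (hε.2.trans (hu hj))
  obtain ⟨n, hn⟩ := Nat.exists_eq_succ_of_ne_zero (Nat.ne_zero_of_lt hfind)
  have hbelow_succ := Nat.find_spec hbelow
  rw [hn] at hbelow_succ
  exact ⟨n, hk n (by omega), hbelow_succ.le, not_lt.1 (Nat.find_min hbelow (by omega))⟩

lemma tendsto_div_nhdsGT_zero_of_monotone_of_seq {m : ℝ → ℝ} (hm : Monotone m) (hm0 : ∀ ε, 0 ≤ m ε)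
    {u : ℕ → ℝ} (hu0 : ∀ n, 0 < u n) (hu : Antitone u) (hulim : Tendsto u atTop (nhds 0))
    (hratio : Tendsto (fun n ↦ u (n + 1) / u n) atTop (nhds 1)) {L : ℝ}
    (hL : Tendsto (fun n ↦ m (u n) / u n) atTop (nhds L)) :
    Tendsto (fun ε ↦ m ε / ε) (nhdsWithin 0 (Ioi 0)) (nhds L) := by
  have hlower : Tendsto (fun n ↦ m (u (n + 1)) / u n) atTop (nhds L) := by
    have h := ((tendsto_add_atTop_iff_nat 1).2 hL).mul hratio
    rw [mul_one] at h
    exact h.congr fun n ↦ div_mul_div_cancel₀ (hu0 (n + 1)).ne'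
  have hupper : Tendsto (fun n ↦ m (u n) / u (n + 1)) atTop (nhds L) := by
    have h := hL.div hratio one_ne_zero
    rw [div_one] at h
    refine h.congr fun n ↦ ?_
    rw [Pi.div_apply, div_div_div_cancel_right₀ (hu0 n).ne']
  refine tendsto_order.2 ⟨fun b hb ↦ ?_, fun b hb ↦ ?_⟩
  · filter_upwards [self_mem_nhdsWithin,
      eventually_nhdsGT_zero_exists_mem_Icc_of_antitone hu0 hu hulim
        (hlower.eventually_const_lt hb)] with ε hε ⟨n, hn, hle, hge⟩
    exact hn.trans_le (div_le_div₀ (hm0 ε) (hm hle) hε hge)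
  · filter_upwards [eventually_nhdsGT_zero_exists_mem_Icc_of_antitone hu0 hu hulim
      (hupper.eventually_lt_const hb)] with ε ⟨n, hn, hle, hge⟩
    exact (div_le_div₀ (hm0 _) (hm hge) (hu0 _) hle).trans_lt hn

lemma exists_antitone_seq_tendsto_zero_summable_rpow {β : ℝ} (hβ : 0 < β) :
    ∃ u : ℕ → ℝ, (∀ n, 0 < u n) ∧ Antitone u ∧ Tendsto u atTop (nhds 0) ∧
      Tendsto (fun n ↦ u (n + 1) / u n) atTop (nhds 1) ∧ Summable fun n ↦ u n ^ β := by
  have hβ' : 0 < 2 / β := by positivity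
  refine ⟨fun n ↦ ((n : ℝ) + 1) ^ (-(2 / β)), fun n ↦ by positivity, fun k n hkn ↦ ?_, ?_, ?_, ?_⟩
  · exact Real.rpow_le_rpow_of_nonpos (by positivity) (by gcongr) (neg_nonpos.2 hβ'.le)
  · exact (tendsto_rpow_neg_atTop hβ').comp
      (tendsto_atTop_add_const_right _ _ tendsto_natCast_atTop_atTop)
  · have h : Tendsto (fun n : ℕ ↦ ((n : ℝ) + 1 + 1) / (n + 1)) atTop (nhds 1) := by
      have h := (tendsto_const_nhds (x := (1 : ℝ))).add
        (tendsto_one_div_add_atTop_nhds_zero_nat (𝕜 := ℝ))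
      rw [add_zero] at h
      exact h.congr fun n ↦ by field_simp
    have h := h.rpow_const (p := -(2 / β)) (.inl one_ne_zero)
    rw [Real.one_rpow] at h
    refine h.congr fun n ↦ ?_
    rw [Real.div_rpow (by positivity) (by positivity)]
    push_cast
    rfl
  · have h := (summable_nat_add_iff 1).2 (Real.summable_nat_rpow.2 (by norm_num : (-2 : ℝ) < -1))
    refine h.congr fun n ↦ ?_
    rw [← Real.rpow_mul (by positivity)]
    push_cast
    congr 1
    field_simp

lemma ae_exists_tendsto_of_eLpNorm_sub_le {E : Type*} [NormedAddCommGroup E] [CompleteSpace E]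
    {f : ℝ → Ω → E} {p : ℝ≥0∞} (hp : 1 ≤ p) (hf : ∀ ε, 0 < ε → AEStronglyMeasurable (f ε) P)
    {C β : ℝ} (hβ : 0 ≤ β)
    (hC : ∀ ε δ, 0 < ε → 0 < δ → eLpNorm (f ε - f δ) p P ≤ ENNReal.ofReal (C * |ε - δ| ^ β))
    {u : ℕ → ℝ} (hu0 : ∀ n, 0 < u n) (hu : Antitone u) (husum : Summable fun n ↦ u n ^ β) :
    ∀ᵐ ω ∂P, ∃ l, Tendsto (fun n ↦ f (u n) ω) atTop (nhds l) := by
  have hterm (n : ℕ) : 0 < (|C| + 1) * u n ^ β := by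
    have := hu0 n
    positivity
  refine Lp.ae_tendsto_of_cauchy_eLpNorm (B := fun n ↦ ENNReal.ofReal ((|C| + 1) * u n ^ β))
    (fun n ↦ hf _ (hu0 n)) hp (husum.mul_left _).tsum_ofReal_ne_top fun N i j hi hj ↦ ?_
  refine (hC _ _ (hu0 i) (hu0 j)).trans_lt ((ENNReal.ofReal_lt_ofReal_iff (hterm N)).2 ?_)
  have hdist : |u i - u j| ≤ u N :=
    abs_sub_le_of_nonneg_of_le (hu0 i).le (hu hi) (hu0 j).le (hu hj)
  have hNβ : 0 < u N ^ β := Real.rpow_pos_of_pos (hu0 N) β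
  calc C * |u i - u j| ^ β ≤ |C| * u N ^ β := by
        gcongr
        exact le_abs_self C
    _ < (|C| + 1) * u N ^ β := by linarith

theorem exists_measurable_ae_tendsto_div_of_monotone {m : ℝ → Ω → ℝ}
    (hm : ∀ ω, Monotone fun ε ↦ m ε ω) (hm0 : ∀ ε ω, 0 ≤ m ε ω)
    (hmeas : ∀ ε, 0 < ε → AEMeasurable (m ε) P) {p : ℝ≥0∞} (hp : 1 ≤ p) {C β : ℝ}
    (hβ : 0 < β)
    (hC : ∀ ε δ, 0 < ε → 0 < δ →
      eLpNorm (fun ω ↦ m ε ω / ε - m δ ω / δ) p P ≤ ENNReal.ofReal (C * |ε - δ| ^ β)) :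
    ∃ L : Ω → ℝ, Measurable L ∧ (∀ ω, 0 ≤ L ω) ∧
      ∀ᵐ ω ∂P, Tendsto (fun ε ↦ m ε ω / ε) (nhdsWithin 0 (Ioi 0)) (nhds (L ω)) := by
  obtain ⟨u, hu0, hu, hulim, hratio, husum⟩ := exists_antitone_seq_tendsto_zero_summable_rpow hβ
  have hae := ae_exists_tendsto_of_eLpNorm_sub_le (f := fun ε ω ↦ m ε ω / ε) hp
    (fun ε hε ↦ ((hmeas ε hε).div_const ε).aestronglyMeasurable) hβ.le hC hu0 hu husum
  obtain ⟨l, hl, hlim⟩ := measurable_limit_of_tendsto_metrizable_ae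
    (fun n ↦ (hmeas (u n) (hu0 n)).div_const (u n)) hae
  refine ⟨fun ω ↦ max (l ω) 0, hl.max measurable_const, fun ω ↦ le_max_right _ _, ?_⟩
  filter_upwards [hlim] with ω hω
  have hlω : 0 ≤ l ω := ge_of_tendsto' hω fun n ↦ div_nonneg (hm0 _ _) (hu0 n).le
  rw [max_eq_left hlω]
  exact tendsto_div_nhdsGT_zero_of_monotone_of_seq (hm ω) (hm0 · ω) hu0 hu hulim hratio hω

end LimitAlongSequence

section SecondMoment

variable {Ω T : Type*} [MeasurableSpace Ω] [MeasurableSpace T] {P : Measure Ω} {μ : Measure T}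

lemma eLpNorm_two_le_ofReal_sqrt {f : Ω → ℝ} (hf : MemLp f 2 P) {B : ℝ}
    (hB : ∫ ω, f ω ^ 2 ∂P ≤ B) : eLpNorm f 2 P ≤ ENNReal.ofReal √B := by
  rw [hf.eLpNorm_eq_integral_rpow_norm (by norm_num) (by norm_num), Real.sqrt_eq_rpow]
  simp only [ENNReal.toReal_ofNat, Real.rpow_ofNat, Real.norm_eq_abs, sq_abs, ← one_div]
  gcongr

variable [IsFiniteMeasure P] [IsFiniteMeasure μ] {F : T → Ω → ℝ} {M : ℝ}

lemma integral_sq_integral_eq_integral_prod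
    (hF : AEStronglyMeasurable (fun q : Ω × T ↦ F q.2 q.1) (P.prod μ))
    (hM : ∀ s ω, |F s ω| ≤ M) :
    ∫ ω, (∫ s, F s ω ∂μ) ^ 2 ∂P = ∫ p, ∫ ω, F p.1 ω * F p.2 ω ∂P ∂μ.prod μ := by
  have hid : Measure.QuasiMeasurePreserving id P P := .id P
  have hfst : AEStronglyMeasurable (fun q : Ω × T × T ↦ F q.2.1 q.1) (P.prod (μ.prod μ)) :=
    hF.comp_quasiMeasurePreserving
      (QuasiMeasurePreserving.prodMap hid Measure.quasiMeasurePreserving_fst)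
  have hsnd : AEStronglyMeasurable (fun q : Ω × T × T ↦ F q.2.2 q.1) (P.prod (μ.prod μ)) :=
    hF.comp_quasiMeasurePreserving
      (QuasiMeasurePreserving.prodMap hid Measure.quasiMeasurePreserving_snd)
  have hint : Integrable (fun q : Ω × T × T ↦ F q.2.1 q.1 * F q.2.2 q.1)
      (P.prod (μ.prod μ)) := by
    refine .of_bound (hfst.mul hsnd) (M * M) (ae_of_all _ fun q ↦ ?_)
    rw [norm_mul]
    exact mul_le_mul (hM _ _) (hM _ _) (norm_nonneg _) ((abs_nonneg _).trans (hM q.2.1 q.1))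
  simp only [pow_two, ← integral_prod_mul]
  exact integral_integral_swap hint

lemma eLpNorm_integral_le_of_abs_integral_mul_le
    (hF : AEStronglyMeasurable (fun q : Ω × T ↦ F q.2 q.1) (P.prod μ))
    (hM : ∀ s ω, |F s ω| ≤ M) {k : T × T → ℝ} (hk : Integrable k (μ.prod μ))
    (hFk : ∀ᵐ p ∂μ.prod μ, |∫ ω, F p.1 ω * F p.2 ω ∂P| ≤ k p) :
    eLpNorm (fun ω ↦ ∫ s, F s ω ∂μ) 2 P ≤ ENNReal.ofReal √(∫ p, k p ∂μ.prod μ) := by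
  have hmem : MemLp (fun ω ↦ ∫ s, F s ω ∂μ) 2 P :=
    .of_bound hF.integral_prod_right' (M * μ.real univ) <| ae_of_all _ fun ω ↦
      norm_integral_le_of_norm_le_const (ae_of_all _ (hM · ω))
  refine eLpNorm_two_le_ofReal_sqrt hmem ?_
  rw [integral_sq_integral_eq_integral_prod hF hM]
  exact (Real.le_norm_self _).trans (norm_integral_le_of_norm_le hk hFk)

end SecondMoment

section OccupationTime

variable {Ω T : Type*} [MeasurableSpace Ω] [MeasurableSpace T] {P : Measure Ω} {μ : Measure T}

lemma integral_boxKernel_eq_measureReal {f : T → ℝ} (hf : AEMeasurable f μ) (a ε : ℝ) :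
    ∫ s, boxKernel a ε (f s) ∂μ = 1 / (2 * ε) * μ.real {s | |f s - a| ≤ ε} := by
  have hset : NullMeasurableSet {s | |f s - a| ≤ ε} μ :=
    hf.nullMeasurableSet_preimage measurableSet_closedBall
  have hindicator : (fun s ↦ boxKernel a ε (f s)) =
      {s | |f s - a| ≤ ε}.indicator fun _ ↦ 1 / (2 * ε) := rfl
  rw [hindicator, integral_indicator₀ hset, setIntegral_const, smul_eq_mul, mul_comm]

variable [IsFiniteMeasure P] [IsFiniteMeasure μ] {X : T → Ω → ℝ}

lemma eLpNorm_integral_boxKernel_sub_le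
    (hX : AEMeasurable (fun q : Ω × T ↦ X q.2 q.1) (P.prod μ)) {a ε δ : ℝ} (hε : 0 < ε)
    (hδ : 0 < δ) {α : ℝ} {k : T × T → ℝ} (hk : Integrable k (μ.prod μ))
    (hXk : ∀ᵐ p ∂μ.prod μ, |∫ ω, (boxKernel a ε (X p.1 ω) - boxKernel a δ (X p.1 ω)) *
      (boxKernel a ε (X p.2 ω) - boxKernel a δ (X p.2 ω)) ∂P| ≤ |ε - δ| ^ α * k p) :
    eLpNorm (fun ω ↦ ∫ s, (boxKernel a ε (X s ω) - boxKernel a δ (X s ω)) ∂μ) 2 P ≤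
      ENNReal.ofReal (√(∫ p, k p ∂μ.prod μ) * |ε - δ| ^ (α / 2)) := by
  have hmeas : AEStronglyMeasurable
      (fun q : Ω × T ↦ boxKernel a ε (X q.2 q.1) - boxKernel a δ (X q.2 q.1)) (P.prod μ) :=
    (((measurable_boxKernel a ε).sub (measurable_boxKernel a δ)).comp_aemeasurable
      hX).aestronglyMeasurable
  have hbound (s : T) (ω : Ω) :
      |boxKernel a ε (X s ω) - boxKernel a δ (X s ω)| ≤ max (1 / (2 * ε)) (1 / (2 * δ)) :=
    abs_sub_le_of_nonneg_of_le (boxKernel_nonneg hε _) (le_max_of_le_left (boxKernel_le hε _))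
      (boxKernel_nonneg hδ _) (le_max_of_le_right (boxKernel_le hδ _))
  refine (eLpNorm_integral_le_of_abs_integral_mul_le hmeas hbound (hk.const_mul _) hXk).trans_eq ?_
  rw [integral_const_mul, Real.sqrt_mul (by positivity), mul_comm, Real.sqrt_eq_rpow (_ ^ α),
    ← Real.rpow_mul (abs_nonneg _), mul_one_div]

theorem exists_measurable_ae_tendsto_normalized_occupationTime
    (hX : AEMeasurable (fun q : Ω × T ↦ X q.2 q.1) (P.prod μ)) (a : ℝ) {α : ℝ} (hα : 0 < α)
    {k : T × T → ℝ} (hk : Integrable k (μ.prod μ))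
    (hXk : ∀ ε δ, 0 < ε → 0 < δ → ∀ᵐ p ∂μ.prod μ,
      |∫ ω, (boxKernel a ε (X p.1 ω) - boxKernel a δ (X p.1 ω)) *
        (boxKernel a ε (X p.2 ω) - boxKernel a δ (X p.2 ω)) ∂P| ≤ |ε - δ| ^ α * k p) :
    ∃ L : Ω → ℝ, Measurable L ∧ (∀ ω, 0 ≤ L ω) ∧
      ∀ᵐ ω ∂P, Tendsto (fun ε ↦ 1 / (2 * ε) * μ.real {s | |X s ω - a| ≤ ε})
        (nhdsWithin 0 (Ioi 0)) (nhds (L ω)) := by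
  let m (ε : ℝ) (ω : Ω) : ℝ := μ.real {s | |X s ω - a| ≤ ε} / 2
  have hm (ε : ℝ) (ω : Ω) : m ε ω / ε = 1 / (2 * ε) * μ.real {s | |X s ω - a| ≤ ε} := by
    simp only [m]
    ring
  have hpath : ∀ᵐ ω ∂P, AEMeasurable (X · ω) μ :=
    hX.aestronglyMeasurable.prodMk_left.mono fun _ h ↦ h.aemeasurable
  have hocc (ε : ℝ) : (fun ω ↦ ∫ s, boxKernel a ε (X s ω) ∂μ) =ᵐ[P] fun ω ↦ m ε ω / ε :=
    hpath.mono fun ω hω ↦ (integral_boxKernel_eq_measureReal hω a ε).trans (hm ε ω).symm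
  have hmeas (ε : ℝ) (hε : 0 < ε) : AEMeasurable (m ε) P := by
    have hint : AEMeasurable (fun ω ↦ ∫ s, boxKernel a ε (X s ω) ∂μ) P :=
      ((measurable_boxKernel a ε).comp_aemeasurable
        hX).aestronglyMeasurable.integral_prod_right'.aemeasurable
    exact ((hint.congr (hocc ε)).mul_const ε).congr
      (ae_of_all _ fun ω ↦ div_mul_cancel₀ _ hε.ne')
  simp only [← hm]
  refine exists_measurable_ae_tendsto_div_of_monotone (p := 2) (β := α / 2)
    (C := √(∫ p, k p ∂μ.prod μ)) ?_ ?_ hmeas one_le_two (half_pos hα) fun ε δ hε hδ ↦ ?_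
  · exact fun ω ε δ hεδ ↦ div_le_div_of_nonneg_right
      (measureReal_mono fun s hs ↦ hs.trans hεδ) zero_le_two
  · exact fun ε ω ↦ by positivity
  · refine (eLpNorm_congr_ae ?_).trans_le (eLpNorm_integral_boxKernel_sub_le hX hε hδ hk
      (hXk ε δ hε hδ))
    filter_upwards [hpath, hocc ε, hocc δ] with ω hω hωε hωδ
    rw [integral_sub (integrable_boxKernel_comp hω hε) (integrable_boxKernel_comp hω hδ), hωε, hωδ]

end OccupationTime

section GaussianIncrements

variable {Ω : Type*} [MeasurableSpace Ω] {P : Measure Ω} {X : ℝ → Ω → ℝ} {b : ℝ → ℝ} {t : ℝ}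

lemma ae_mem_Ioc_mem_Ioc_ne (t : ℝ) :
    ∀ᵐ p : ℝ × ℝ ∂(volume.restrict (Icc 0 t)).prod (volume.restrict (Icc 0 t)),
      p.1 ∈ Ioc 0 t ∧ p.2 ∈ Ioc 0 t ∧ p.1 ≠ p.2 := by
  have hpos : ∀ᵐ s ∂volume.restrict (Icc 0 t), s ∈ Ioc 0 t := by
    rw [← restrict_Ioc_eq_restrict_Icc]
    exact ae_restrict_mem measurableSet_Ioc
  have hne : ∀ᵐ p : ℝ × ℝ ∂(volume.restrict (Icc 0 t)).prod (volume.restrict (Icc 0 t)),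
      p.1 ≠ p.2 :=
    (Measure.ae_prod_iff_ae_ae (measurableSet_eq_fun measurable_fst measurable_snd).compl).2
      (ae_of_all _ fun s ↦ ae_iff.2 (by simp))
  filter_upwards [Measure.quasiMeasurePreserving_fst.ae hpos,
    Measure.quasiMeasurePreserving_snd.ae hpos, hne] with p h1 h2 h3 using ⟨h1, h2, h3⟩

lemma abs_integral_boxKernel_sub_mul_le_of_ne
    (hX : ∀ s u, 0 < s → s < u → u ≤ t → HasLaw (fun ω ↦ (X s ω, X u ω - X s ω))
      ((gaussianReal (b s) s.toNNReal).prod (gaussianReal (b u - b s) (u - s).toNNReal)) P)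
    (a : ℝ) {s u : ℝ} (hs : s ∈ Ioc 0 t) (hu : u ∈ Ioc 0 t) (hsu : s ≠ u) {ε δ : ℝ}
    (hε : 0 < ε) (hδ : 0 < δ) :
    |∫ ω, (boxKernel a ε (X s ω) - boxKernel a δ (X s ω)) *
        (boxKernel a ε (X u ω) - boxKernel a δ (X u ω)) ∂P| ≤
      |ε - δ| ^ (1 / 2 : ℝ) * (2 * (|u - s| ^ (-(3 / 4) : ℝ) * min s u ^ (-(1 / 2) : ℝ))) := by
  wlog hlt : s < u generalizing s u
  · have h := this hu hs hsu.symm (hsu.lt_or_gt.resolve_left hlt)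
    simpa only [mul_comm, min_comm, abs_sub_comm] using h
  have h := abs_integral_boxKernel_sub_mul_le (Real.toNNReal_pos.2 hs.1).ne'
    (Real.toNNReal_pos.2 (sub_pos.2 hlt)).ne' (hX s u hs.1 hlt hu.2) (α := 1 / 2) (by norm_num)
    (by norm_num) a hε hδ
  rw [Real.coe_toNNReal _ hs.1.le, Real.coe_toNNReal _ (sub_pos.2 hlt).le] at h
  rw [min_eq_left hlt.le, abs_of_pos (sub_pos.2 hlt)]
  have hholder : ((1 / 2 : ℝ≥0) : ℝ) = 1 / 2 := by norm_num
  have hexponent : (-((1 + 1 / 2) / 2) : ℝ) = -(3 / 4) := by norm_num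
  rw [hholder, hexponent] at h
  exact h.trans_eq (by ring)

theorem brownian_local_time_limit_exists_general [IsFiniteMeasure P]
    (hmeas : AEMeasurable (fun q : Ω × ℝ ↦ X q.2 q.1) (P.prod (volume.restrict (Icc 0 t))))
    (hX : ∀ s u, 0 < s → s < u → u ≤ t → HasLaw (fun ω ↦ (X s ω, X u ω - X s ω))
      ((gaussianReal (b s) s.toNNReal).prod (gaussianReal (b u - b s) (u - s).toNNReal)) P)
    (a : ℝ) :
    ∃ L : Ω → ℝ, Measurable L ∧ (∀ ω, 0 ≤ L ω) ∧
      ∀ᵐ ω ∂P,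
        Tendsto
          (fun ε : ℝ ↦
            (1 / (2 * ε)) * (volume {s : ℝ | s ∈ Icc (0 : ℝ) t ∧ |X s ω - a| ≤ ε}).toReal)
          (nhdsWithin 0 (Ioi 0)) (nhds (L ω)) := by
  have hk : Integrable
      (fun p : ℝ × ℝ ↦ 2 * (|p.2 - p.1| ^ (-(3 / 4) : ℝ) * min p.1 p.2 ^ (-(1 / 2) : ℝ)))
      ((volume.restrict (Icc 0 t)).prod (volume.restrict (Icc 0 t))) := by
    rw [Measure.prod_restrict]
    exact (integrableOn_abs_sub_rpow_mul_min_rpow (by norm_num) (by norm_num) t).const_mul 2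
  have hlimit := exists_measurable_ae_tendsto_normalized_occupationTime hmeas a one_half_pos hk
    fun ε δ hε hδ ↦ (ae_mem_Ioc_mem_Ioc_ne t).mono fun p ⟨hp1, hp2, hne⟩ ↦
      abs_integral_boxKernel_sub_mul_le_of_ne hX a hp1 hp2 hne hε hδ
  have hset (ε : ℝ) (ω : Ω) : {s : ℝ | s ∈ Icc (0 : ℝ) t ∧ |X s ω - a| ≤ ε} =
      {s | |X s ω - a| ≤ ε} ∩ Icc 0 t := ext fun s ↦ and_comm
  simpa only [hset, Measure.real, Measure.restrict_apply' measurableSet_Icc] using hlimit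

end GaussianIncrements

section BrownianMotion

variable {Ω : Type*} [MeasurableSpace Ω] {P : Measure Ω}

lemma aemeasurable_uncurry_of_ae_continuous {T E : Type*} [TopologicalSpace T]
    [TopologicalSpace.MetrizableSpace T] [SecondCountableTopology T] [MeasurableSpace T]
    [OpensMeasurableSpace T] [TopologicalSpace E] [TopologicalSpace.PseudoMetrizableSpace E]
    [MeasurableSpace E] [BorelSpace E] [Nonempty E] {X : T → Ω → E} (hX : ∀ s, Measurable (X s))
    (hcont : ∀ᵐ ω ∂P, Continuous (X · ω)) (μ : Measure T) :
    AEMeasurable (fun q : Ω × T ↦ X q.2 q.1) (P.prod μ) := by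
  classical
  obtain ⟨c⟩ := ‹Nonempty E›
  let N : Set Ω := toMeasurable P {ω | ¬ Continuous (X · ω)}
  have hN : MeasurableSet N := measurableSet_toMeasurable _ _
  have hNnull : ∀ᵐ ω ∂P, ω ∉ N := measure_eq_zero_iff_ae_notMem.1 <| by
    rw [measure_toMeasurable]
    exact hcont
  let V (s : T) : Ω → E := N.piecewise (fun _ ↦ c) (X s)
  have hVcont (ω : Ω) : Continuous (V · ω) := by
    by_cases hω : ω ∈ N
    · simpa only [V, piecewise_eq_of_mem _ _ _ hω] using continuous_const
    · have hXω : Continuous (X · ω) := not_not.1 fun h ↦ hω (subset_toMeasurable _ _ h)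
      simpa only [V, piecewise_eq_of_notMem _ _ _ hω] using hXω
  have hV : Measurable (Function.uncurry V) :=
    measurable_uncurry_of_continuous_of_measurable hVcont
      fun s ↦ measurable_const.piecewise hN (hX s)
  refine ⟨fun q ↦ V q.2 q.1, hV.comp measurable_swap, ?_⟩
  filter_upwards [Measure.quasiMeasurePreserving_fst.ae hNnull] with q hq
  exact (piecewise_eq_of_notMem N _ (X q.2) hq).symm

namespace IsBrownianMotion

variable {W : ℝ → Ω → ℝ}

lemma hasLaw_sub (hW : IsBrownianMotion P W) {s u : ℝ} (hs : 0 ≤ s) (hsu : s ≤ u) :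
    HasLaw (fun ω ↦ W u ω - W s ω) (gaussianReal 0 (u - s).toNNReal) P :=
  ⟨((hW.meas u).sub (hW.meas s)).aemeasurable, hW.incr_law s u hs hsu⟩

lemma hasLaw_eval (hW : IsBrownianMotion P W) {s : ℝ} (hs : 0 ≤ s) :
    HasLaw (W s) (gaussianReal 0 s.toNNReal) P := by
  simpa only [hW.init, sub_zero] using hW.hasLaw_sub le_rfl hs

lemma indepFun_eval_sub (hW : IsBrownianMotion P W) {s u : ℝ} (hs : 0 ≤ s) (hsu : s ≤ u) :
    IndepFun (W s) (fun ω ↦ W u ω - W s ω) P := by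
  have hmono : Monotone ![0, s, u] := by
    simp [Fin.monotone_iff_le_succ, Fin.forall_fin_two, hs, hsu]
  have h := (hW.indep_incr 2 ![0, s, u] hmono le_rfl).indepFun (zero_ne_one (α := Fin 2))
  simpa [hW.init] using h

lemma hasLaw_eval_prodMk_sub (hW : IsBrownianMotion P W) {s u : ℝ} (hs : 0 ≤ s) (hsu : s ≤ u) :
    HasLaw (fun ω ↦ (W s ω, W u ω - W s ω))
      ((gaussianReal 0 s.toNNReal).prod (gaussianReal 0 (u - s).toNNReal)) P :=
  have := hW.isProb
  (hW.indepFun_eval_sub hs hsu).hasLaw_prod (hW.hasLaw_eval hs) (hW.hasLaw_sub hs hsu)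

end IsBrownianMotion

end BrownianMotion

/-- For every fixed `t > 0` and level `a`, the limit
`L_t(a) = lim_{ε→0+} (1/(2ε)) λ{ s ∈ [0,t] : |W_s − a| ≤ ε }` exists almost surely
and defines a nonnegative, almost surely finite random variable. -/
theorem brownian_local_time_limit_exists
    {Ω : Type*} [MeasurableSpace Ω] (P : Measure Ω) (W : ℝ → Ω → ℝ)
    (hW : IsBrownianMotion P W) (t : ℝ) (ht : 0 < t) (a : ℝ) :
    ∃ L : Ω → ℝ, Measurable L ∧ (∀ ω, 0 ≤ L ω) ∧
      ∀ᵐ ω ∂P,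
        Tendsto
          (fun ε : ℝ =>
            (1 / (2 * ε)) *
              (volume {s : ℝ | s ∈ Icc (0 : ℝ) t ∧ |W s ω - a| ≤ ε}).toReal)
          (nhdsWithin 0 (Ioi 0)) (nhds (L ω)) := by
  have := hW.isProb
  exact brownian_local_time_limit_exists_general (b := 0)
    (aemeasurable_uncurry_of_ae_continuous hW.meas hW.cont _)
    (fun s u hs hsu _ ↦ by simpa using hW.hasLaw_eval_prodMk_sub hs.le hsu.le) a
end

section
/- Let W = (W_t)_{t≥0} be a standard one-dimensional Brownian motion on a probability space (Ω, F, P). There exists a random field L : [0,∞) × ℝ × Ω → [0,∞) such that, for almost every ω, the map (t,x) ↦ L_t(x,ω) is jointly continuous, and such that almost surely, for every t ≥ 0 and every Borel set B ⊆ ℝ, ∫_0^t 1_B(W_s) ds = ∫_B L_t(x) dx (Trotter's existence theorem for Brownian local time as an occupation density). -/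
/-!
The local time is the derivative of the occupation measure `B ↦ ∫_0^t 1_B (W_s) ds` along dyadic
intervals. Subtracting the occupation densities of two neighbouring dyadic intervals of length
`2 ^ (-j)` gives an additive functional `∫_0^t b (W_s) ds` of a difference `b` of two normalised
indicators. Its moments satisfy Kac's recursion
`E (∫_0^t b (x + W_s) ds) ^ (n + 1) = (n + 1) ∫_0^t E [b (x + W_s) m_n (t - s, x + W_s)] ds`,
in which `m_n` is the `n`-th moment as a function of time and starting point. Since `b` has mean
zero, Hölder continuity of the heat kernel yields a factor `2 ^ (-j / 2)` every two steps, and the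
sixteenth moment is at most of order `2 ^ (-4 j)`. A grid of about `8 ^ j` space-time points is thus
controlled by Borel–Cantelli: almost surely the jumps between neighbouring intervals decay
geometrically in `j`, uniformly in time and locally uniformly in space. The dyadic occupation
densities then converge uniformly to a continuous limit, which is a density of the occupation
measure.
-/

open MeasureTheory ProbabilityTheory Filter Set
open scoped ENNReal NNReal

section DyadicDensity

open scoped Topology

/-- The dyadic interval `[k / 2 ^ j, (k + 1) / 2 ^ j)`, encoded as a fibre of the floor function so
that nesting and disjointness of the intervals are statements about integers. -/
def dyadicCell (j : ℕ) (k : ℤ) : Set ℝ := {y | ⌊y * 2 ^ j⌋ = k}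

lemma mem_dyadicCell {j : ℕ} {k : ℤ} {y : ℝ} : y ∈ dyadicCell j k ↔ ⌊y * 2 ^ j⌋ = k := Iff.rfl

lemma mem_dyadicCell_floor (j : ℕ) (y : ℝ) : y ∈ dyadicCell j ⌊y * 2 ^ j⌋ := rfl

lemma dyadicCell_eq_Ico (j : ℕ) (k : ℤ) :
    dyadicCell j k = Ico (k / 2 ^ j : ℝ) (k / 2 ^ j + (2 ^ j)⁻¹) := by
  ext y
  have h : (0 : ℝ) < 2 ^ j := by positivity
  rw [mem_dyadicCell, Int.floor_eq_iff, mem_Ico, div_le_iff₀ h, inv_eq_one_div, ← add_div,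
    lt_div_iff₀ h]

lemma measurableSet_dyadicCell (j : ℕ) (k : ℤ) : MeasurableSet (dyadicCell j k) := by
  rw [dyadicCell_eq_Ico]; exact measurableSet_Ico

lemma volume_dyadicCell (j : ℕ) (k : ℤ) : volume (dyadicCell j k) = ENNReal.ofReal (2 ^ j)⁻¹ := by
  rw [dyadicCell_eq_Ico, Real.volume_Ico, add_sub_cancel_left]

lemma measure_dyadicCell_ne_top (μ : Measure ℝ) [IsLocallyFiniteMeasure μ] (j : ℕ) (k : ℤ) :
    μ (dyadicCell j k) ≠ ∞ := by
  rw [dyadicCell_eq_Ico]; exact measure_Ico_lt_top.ne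

lemma isBounded_dyadicCell (j : ℕ) (k : ℤ) : Bornology.IsBounded (dyadicCell j k) := by
  rw [dyadicCell_eq_Ico]; exact Metric.isBounded_Ico _ _

lemma floor_mul_two_pow_add_ediv (y : ℝ) (i d : ℕ) :
    ⌊y * 2 ^ (i + d)⌋ / 2 ^ d = ⌊y * 2 ^ i⌋ := by
  simpa [pow_add, mul_assoc] using
    Int.mul_natCast_floor_div_cancel (pow_ne_zero d two_ne_zero : 2 ^ d ≠ 0) (y * 2 ^ i)

lemma dyadicCell_eq_union (j : ℕ) (k : ℤ) :
    dyadicCell j k = dyadicCell (j + 1) (2 * k) ∪ dyadicCell (j + 1) (2 * k + 1) := by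
  ext y
  have h := floor_mul_two_pow_add_ediv y j 1
  simp only [mem_union, mem_dyadicCell]
  omega

lemma disjoint_dyadicCell (j : ℕ) {k l : ℤ} (h : k ≠ l) :
    Disjoint (dyadicCell j k) (dyadicCell j l) :=
  Set.disjoint_left.2 fun _ hk hl => h (hk.symm.trans hl)

lemma dyadicCell_subset_of_nonempty_inter {i j : ℕ} (hij : i ≤ j) {k l : ℤ}
    (h : (dyadicCell i k ∩ dyadicCell j l).Nonempty) : dyadicCell j l ⊆ dyadicCell i k := by
  obtain ⟨d, rfl⟩ := Nat.exists_eq_add_of_le hij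
  obtain ⟨y, hyk, hyl⟩ := h
  intro z hz
  rw [mem_dyadicCell] at *
  rw [← hyk, ← floor_mul_two_pow_add_ediv, ← floor_mul_two_pow_add_ediv y i d, hz, hyl]

lemma isPiSystem_dyadicCell : IsPiSystem (range (Function.uncurry dyadicCell)) := by
  rintro _ ⟨⟨i, k⟩, rfl⟩ _ ⟨⟨j, l⟩, rfl⟩ h
  rcases le_total i j with hij | hji
  · exact ⟨(j, l), (inter_eq_right.2 (dyadicCell_subset_of_nonempty_inter hij h)).symm⟩
  · rw [inter_comm] at h
    exact ⟨(i, k), (inter_eq_left.2 (dyadicCell_subset_of_nonempty_inter hji h)).symm⟩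

lemma Iio_eq_biUnion_dyadicCell (a : ℝ) :
    Iio a = ⋃ p ∈ {p : ℕ × ℤ | dyadicCell p.1 p.2 ⊆ Iio a}, dyadicCell p.1 p.2 := by
  refine Subset.antisymm (fun x hx => ?_) (iUnion₂_subset fun _ hp => hp)
  obtain ⟨j, hj⟩ := exists_pow_lt_of_lt_one (sub_pos.2 hx) (by norm_num : (2⁻¹ : ℝ) < 1)
  rw [inv_pow] at hj
  refine mem_biUnion (x := (j, ⌊x * 2 ^ j⌋)) (fun y hy => ?_) (mem_dyadicCell_floor j x)
  have hx' := mem_dyadicCell_floor j x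
  rw [dyadicCell_eq_Ico] at hx' hy
  exact mem_Iio.2 (by linarith [hx'.1, hy.2])

lemma borel_eq_generateFrom_dyadicCell :
    borel ℝ = MeasurableSpace.generateFrom (range (Function.uncurry dyadicCell)) := by
  refine le_antisymm ?_ (MeasurableSpace.generateFrom_le ?_)
  · rw [borel_eq_generateFrom_Iio]
    refine MeasurableSpace.generateFrom_le ?_
    rintro _ ⟨a, rfl⟩
    rw [Iio_eq_biUnion_dyadicCell a]
    exact MeasurableSet.biUnion (to_countable _) fun p _ =>
      MeasurableSpace.measurableSet_generateFrom ⟨p, rfl⟩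
  · rintro _ ⟨p, rfl⟩
    rw [← BorelSpace.measurable_eq (α := ℝ)]
    exact measurableSet_dyadicCell p.1 p.2

lemma ext_of_dyadicCell {μ ν : Measure ℝ} [IsLocallyFiniteMeasure μ]
    (h : ∀ j k, μ (dyadicCell j k) = ν (dyadicCell j k)) : μ = ν := by
  refine Measure.ext_of_generateFrom_of_cover_subset (T := range (Function.uncurry dyadicCell))
    ((BorelSpace.measurable_eq (α := ℝ)).trans borel_eq_generateFrom_dyadicCell)
    isPiSystem_dyadicCell Subset.rfl (countable_range _) (eq_univ_of_forall fun x => ?_) ?_ ?_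
  · exact ⟨_, ⟨(0, ⌊x * 2 ^ 0⌋), rfl⟩, rfl⟩
  · rintro _ ⟨p, rfl⟩
    exact measure_dyadicCell_ne_top μ p.1 p.2
  · rintro _ ⟨p, rfl⟩
    exact h p.1 p.2

/-- The average density of `μ` on a dyadic cell. -/
noncomputable def cellDensity (μ : Measure ℝ) (j : ℕ) (k : ℤ) : ℝ :=
  2 ^ j * μ.real (dyadicCell j k)

/-- The conditional expectation of a density of `μ` on the dyadic cells of level `j`: the step
function equal to the average density of `μ` on the cell containing `x`. -/
noncomputable def dyadicDensity (μ : Measure ℝ) (j : ℕ) (x : ℝ) : ℝ :=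
  cellDensity μ j ⌊x * 2 ^ j⌋

/-- The dyadic derivative of `μ` at `x`. The upper limit is the limit of `dyadicDensity μ j x`
wherever that exists. -/
noncomputable def dyadicDeriv (μ : Measure ℝ) (x : ℝ) : ℝ :=
  limsup (fun j => dyadicDensity μ j x) atTop

/-- The jump of the dyadic density of level `j` between the adjacent cells `k` and `k + 1`. -/
noncomputable def dyadicJump (μ : Measure ℝ) (j : ℕ) (k : ℤ) : ℝ :=
  cellDensity μ j k - cellDensity μ j (k + 1)

/-- The jumps of the step function `dyadicDensity μ j` inside `[-N, N]` decay geometrically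
in the level `j`. -/
def HasDyadicJumpBound (μ : Measure ℝ) (N : ℕ) (S ρ : ℝ) : Prop :=
  ∀ (j : ℕ) (k : ℤ), |k| ≤ N * 2 ^ j → |dyadicJump μ j k| ≤ S * ρ ^ j

variable {μ : Measure ℝ}

lemma cellDensity_nonneg (μ : Measure ℝ) (j : ℕ) (k : ℤ) : 0 ≤ cellDensity μ j k := by
  unfold cellDensity; positivity

lemma dyadicDensity_nonneg (μ : Measure ℝ) (j : ℕ) (x : ℝ) : 0 ≤ dyadicDensity μ j x :=
  cellDensity_nonneg μ j _

lemma dyadicDeriv_nonneg (μ : Measure ℝ) (x : ℝ) : 0 ≤ dyadicDeriv μ x :=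
  Real.sInf_nonneg fun _ ha => (eventually_map.1 ha).exists.elim fun j hj =>
    (dyadicDensity_nonneg μ j x).trans hj

lemma measurable_dyadicDensity (μ : Measure ℝ) (j : ℕ) : Measurable (dyadicDensity μ j) :=
  measurable_from_top.comp (Int.measurable_floor.comp (measurable_id.mul_const _))

lemma measurable_dyadicDeriv_apply {α : Type*} [MeasurableSpace α] {μ : α → Measure ℝ}
    (hμ : Measurable μ) (x : ℝ) : Measurable fun a => dyadicDeriv (μ a) x :=
  Measurable.limsup fun j =>
    (((Measure.measurable_coe (measurableSet_dyadicCell j _)).comp hμ).ennreal_toReal).const_mul _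

lemma cellDensity_eq_half_add [IsLocallyFiniteMeasure μ] (j : ℕ) (k : ℤ) :
    cellDensity μ j k =
      (cellDensity μ (j + 1) (2 * k) + cellDensity μ (j + 1) (2 * k + 1)) / 2 := by
  rw [cellDensity, dyadicCell_eq_union, measureReal_union (disjoint_dyadicCell _ (by omega))
    (measurableSet_dyadicCell _ _) (measure_dyadicCell_ne_top μ _ _)
    (measure_dyadicCell_ne_top μ _ _)]
  simp only [cellDensity, pow_succ]
  ring

lemma setLIntegral_dyadicDensity [IsLocallyFiniteMeasure μ] (i d : ℕ) (k : ℤ) :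
    ∫⁻ x in dyadicCell i k, ENNReal.ofReal (dyadicDensity μ (i + d) x) = μ (dyadicCell i k) := by
  induction d generalizing i k with
  | zero =>
    have hconst : ∀ x ∈ dyadicCell i k,
        ENNReal.ofReal (dyadicDensity μ (i + 0) x) = ENNReal.ofReal (cellDensity μ i k) := by
      rintro x rfl; rfl
    rw [setLIntegral_congr_fun (measurableSet_dyadicCell i k) hconst, setLIntegral_const,
      volume_dyadicCell, ← ENNReal.ofReal_mul (cellDensity_nonneg μ i k), cellDensity,
      mul_right_comm, mul_inv_cancel₀ (by positivity), one_mul,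
      ofReal_measureReal (measure_dyadicCell_ne_top μ i k)]
  | succ d ih =>
    have hdisj : Disjoint (dyadicCell (i + 1) (2 * k)) (dyadicCell (i + 1) (2 * k + 1)) :=
      disjoint_dyadicCell _ (by omega)
    rw [dyadicCell_eq_union, lintegral_union (measurableSet_dyadicCell _ _) hdisj,
      measure_union hdisj (measurableSet_dyadicCell _ _), ← ih, ← ih, add_right_comm i 1 d,
      add_assoc]

theorem eq_withDensity_of_tendsto_dyadicDensity [IsLocallyFiniteMeasure μ] {l : ℝ → ℝ}
    (hlim : ∀ x, Tendsto (fun j => dyadicDensity μ j x) atTop (𝓝 (l x)))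
    (hbdd : ∀ R : ℝ, ∃ M, ∀ j x, |x| ≤ R → dyadicDensity μ j x ≤ M) :
    μ = volume.withDensity fun x => ENNReal.ofReal (l x) := by
  refine ext_of_dyadicCell fun i k => ?_
  obtain ⟨R, hR⟩ := (isBounded_dyadicCell i k).exists_norm_le
  obtain ⟨M, hM⟩ := hbdd R
  have hconv : Tendsto (fun d => ∫⁻ x in dyadicCell i k, ENNReal.ofReal (dyadicDensity μ (i + d) x))
      atTop (𝓝 (∫⁻ x in dyadicCell i k, ENNReal.ofReal (l x))) := by
    refine tendsto_lintegral_of_dominated_convergence (fun _ => ENNReal.ofReal M)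
      (fun d => (measurable_dyadicDensity μ _).ennreal_ofReal) (fun d => ?_) ?_ ?_
    · filter_upwards [ae_restrict_mem (measurableSet_dyadicCell i k)] with x hx
      exact ENNReal.ofReal_le_ofReal (hM _ x (hR x hx))
    · rw [setLIntegral_const, volume_dyadicCell]
      exact ENNReal.mul_ne_top ENNReal.ofReal_ne_top ENNReal.ofReal_ne_top
    · refine ae_of_all _ fun x => (ENNReal.continuous_ofReal.tendsto _).comp ?_
      simpa only [add_comm i] using (tendsto_add_atTop_iff_nat i).2 (hlim x)
  simp only [setLIntegral_dyadicDensity] at hconv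
  rw [withDensity_apply _ (measurableSet_dyadicCell i k)]
  exact tendsto_const_nhds_iff.1 hconv

lemma abs_floor_mul_two_pow_le {x : ℝ} {N : ℕ} (hx : |x| ≤ N) (j : ℕ) :
    |⌊x * 2 ^ j⌋| ≤ N * 2 ^ j := by
  have h2 : (0 : ℝ) ≤ 2 ^ j := by positivity
  rw [abs_le] at hx ⊢
  constructor
  · rw [Int.le_floor]
    push_cast
    nlinarith [hx.1]
  · have h : (⌊x * 2 ^ j⌋ : ℝ) ≤ N * 2 ^ j :=
      (Int.floor_le _).trans (mul_le_mul_of_nonneg_right hx.2 h2)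
    exact_mod_cast h

namespace HasDyadicJumpBound

variable {N : ℕ} {S ρ : ℝ}

lemma nonneg (h : HasDyadicJumpBound μ N S ρ) : 0 ≤ S := by
  simpa using (abs_nonneg _).trans (h 0 0 (by simp))

lemma mono {M : ℕ} (h : HasDyadicJumpBound μ M S ρ) (hNM : N ≤ M) : HasDyadicJumpBound μ N S ρ :=
  fun j k hk => h j k (hk.trans (by gcongr))

lemma abs_dyadicDensity_succ_sub_le [IsLocallyFiniteMeasure μ] (h : HasDyadicJumpBound μ N S ρ)
    {x : ℝ} (hx : |x| ≤ N) (j : ℕ) :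
    |dyadicDensity μ j x - dyadicDensity μ (j + 1) x| ≤ S * ρ ^ (j + 1) / 2 := by
  set k := ⌊x * 2 ^ j⌋ with hk
  have hjump := h (j + 1) (2 * k) (by
    rw [abs_mul, abs_two, pow_succ]
    linarith [abs_floor_mul_two_pow_le hx j])
  have hhalf := floor_mul_two_pow_add_ediv x j 1
  have hchild : ⌊x * 2 ^ (j + 1)⌋ = 2 * k ∨ ⌊x * 2 ^ (j + 1)⌋ = 2 * k + 1 := by omega
  rw [dyadicJump, abs_le] at hjump
  rw [abs_le]
  simp only [dyadicDensity]
  rw [← hk, cellDensity_eq_half_add]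
  rcases hchild with hc | hc <;> rw [hc] <;> constructor <;> linarith [hjump.1, hjump.2]

lemma abs_dyadicDensity_sub_le (h : HasDyadicJumpBound μ N S ρ) (hρ : 0 ≤ ρ) {x y : ℝ}
    (hx : |x| ≤ N) (hy : |y| ≤ N) {j : ℕ} (hxy : |x - y| < (2 ^ j)⁻¹) :
    |dyadicDensity μ j x - dyadicDensity μ j y| ≤ S * ρ ^ j := by
  wlog hle : x ≤ y generalizing x y
  · rw [abs_sub_comm]
    exact this hy hx (by rwa [abs_sub_comm]) (le_of_not_ge hle)
  have h2 : (0 : ℝ) < 2 ^ j := by positivity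
  have hlt : y * 2 ^ j ≤ x * 2 ^ j + 1 := by
    rw [abs_sub_comm, abs_of_nonneg (sub_nonneg.2 hle), inv_eq_one_div, lt_div_iff₀ h2]
      at hxy
    linarith
  have hlo : ⌊x * 2 ^ j⌋ ≤ ⌊y * 2 ^ j⌋ := Int.floor_le_floor (by gcongr)
  have hhi : ⌊y * 2 ^ j⌋ ≤ ⌊x * 2 ^ j⌋ + 1 := by
    rw [← Int.floor_add_one]
    exact Int.floor_le_floor hlt
  simp only [dyadicDensity]
  rcases (by omega : ⌊y * 2 ^ j⌋ = ⌊x * 2 ^ j⌋ ∨ ⌊y * 2 ^ j⌋ = ⌊x * 2 ^ j⌋ + 1) with heq | heq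
  · rw [heq, sub_self, abs_zero]
    exact mul_nonneg h.nonneg (pow_nonneg hρ j)
  · rw [heq]
    exact h j _ (abs_floor_mul_two_pow_le hx j)

section Convergence

variable [IsLocallyFiniteMeasure μ]

lemma dist_dyadicDensity_succ_le (h : HasDyadicJumpBound μ N S ρ) (hρ₀ : 0 ≤ ρ) (hρ₁ : ρ < 1)
    {x : ℝ} (hx : |x| ≤ N) (j : ℕ) :
    dist (dyadicDensity μ j x) (dyadicDensity μ (j + 1) x) ≤ S * ρ ^ j := by
  refine (h.abs_dyadicDensity_succ_sub_le hx j).trans ?_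
  have hS : 0 ≤ S * ρ ^ j := mul_nonneg h.nonneg (pow_nonneg hρ₀ j)
  rw [pow_succ, ← mul_assoc]
  nlinarith

lemma tendsto_dyadicDensity (h : HasDyadicJumpBound μ N S ρ) (hρ₀ : 0 ≤ ρ) (hρ₁ : ρ < 1)
    {x : ℝ} (hx : |x| ≤ N) :
    Tendsto (fun j => dyadicDensity μ j x) atTop (𝓝 (dyadicDeriv μ x)) := by
  obtain ⟨l, hl⟩ := cauchySeq_tendsto_of_complete <|
    cauchySeq_of_le_geometric ρ S hρ₁ (h.dist_dyadicDensity_succ_le hρ₀ hρ₁ hx)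
  rwa [dyadicDeriv, hl.limsup_eq]

lemma abs_dyadicDensity_sub_dyadicDeriv_le (h : HasDyadicJumpBound μ N S ρ) (hρ₀ : 0 ≤ ρ)
    (hρ₁ : ρ < 1) {x : ℝ} (hx : |x| ≤ N) (j : ℕ) :
    |dyadicDensity μ j x - dyadicDeriv μ x| ≤ S * ρ ^ j / (1 - ρ) :=
  dist_le_of_le_geometric_of_tendsto ρ S hρ₁ (h.dist_dyadicDensity_succ_le hρ₀ hρ₁ hx)
    (h.tendsto_dyadicDensity hρ₀ hρ₁ hx) j

end Convergence

lemma dyadicDensity_le [IsFiniteMeasure μ] (h : HasDyadicJumpBound μ N S ρ) (hρ₀ : 0 ≤ ρ)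
    (hρ₁ : ρ < 1) {x : ℝ} (hx : |x| ≤ N) (j : ℕ) :
    dyadicDensity μ j x ≤ μ.real univ + 2 * (S / (1 - ρ)) := by
  have h0 := abs_le.1 (h.abs_dyadicDensity_sub_dyadicDeriv_le hρ₀ hρ₁ hx 0)
  have hj := abs_le.1 (h.abs_dyadicDensity_sub_dyadicDeriv_le hρ₀ hρ₁ hx j)
  have hSj : S * ρ ^ j / (1 - ρ) ≤ S / (1 - ρ) :=
    div_le_div_of_nonneg_right (mul_le_of_le_one_right h.nonneg (pow_le_one₀ hρ₀ hρ₁.le))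
      (sub_nonneg.2 hρ₁.le)
  have hmass : dyadicDensity μ 0 x ≤ μ.real univ := by
    rw [dyadicDensity, cellDensity, pow_zero, one_mul]
    exact measureReal_mono (subset_univ _)
  rw [pow_zero, mul_one] at h0
  linarith [h0.1, h0.2, hj.1, hj.2]

end HasDyadicJumpBound

theorem eq_withDensity_dyadicDeriv [IsFiniteMeasure μ] {ρ : ℝ} (hρ₀ : 0 ≤ ρ) (hρ₁ : ρ < 1)
    (h : ∀ N, ∃ S, HasDyadicJumpBound μ N S ρ) :
    μ = volume.withDensity fun x => ENNReal.ofReal (dyadicDeriv μ x) := by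
  refine eq_withDensity_of_tendsto_dyadicDensity (fun x => ?_) fun R => ?_
  · obtain ⟨N, hN⟩ := exists_nat_ge |x|
    obtain ⟨S, hS⟩ := h N
    exact hS.tendsto_dyadicDensity hρ₀ hρ₁ hN
  · obtain ⟨N, hN⟩ := exists_nat_ge R
    obtain ⟨S, hS⟩ := h N
    exact ⟨_, fun j x hx => hS.dyadicDensity_le hρ₀ hρ₁ (hx.trans hN) j⟩

theorem continuousOn_dyadicDeriv {T : Type*} [TopologicalSpace T] {μ : T → Measure ℝ} {s : Set T}
    {ρ : ℝ} [∀ t, IsLocallyFiniteMeasure (μ t)]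
    (hcont : ∀ j k, ContinuousOn (fun t => cellDensity (μ t) j k) s) (hρ₀ : 0 ≤ ρ) (hρ₁ : ρ < 1)
    (hbound : ∀ t₀ ∈ s, ∀ N, ∃ S, ∀ᶠ t in 𝓝[s] t₀, HasDyadicJumpBound (μ t) N S ρ) :
    ContinuousOn (fun p : T × ℝ => dyadicDeriv (μ p.1) p.2) (s ×ˢ univ) := by
  rintro ⟨t₀, x₀⟩ ⟨ht₀, -⟩
  obtain ⟨N, hN⟩ := exists_nat_ge (|x₀| + 1)
  obtain ⟨S, hS⟩ := hbound t₀ ht₀ N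
  have hS₀ := hS.self_of_nhdsWithin ht₀
  have hx₀ : |x₀| ≤ N := by linarith
  rw [ContinuousWithinAt, nhdsWithin_prod_eq, nhdsWithin_univ, Metric.tendsto_nhds]
  intro ε hε
  have hdecay : Tendsto (fun j : ℕ => S * ρ ^ j * (2 / (1 - ρ) + 1)) atTop (𝓝 0) := by
    simpa using ((tendsto_pow_atTop_nhds_zero_of_lt_one hρ₀ hρ₁).const_mul S).mul_const
      (2 / (1 - ρ) + 1)
  obtain ⟨j, hj⟩ := (hdecay.eventually_lt_const (half_pos hε)).exists
  have htime := Metric.tendsto_nhds.1 (hcont j ⌊x₀ * 2 ^ j⌋ t₀ ht₀) (ε / 2) (half_pos hε)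
  have hspace : ∀ᶠ x in 𝓝 x₀, |x - x₀| < (2 ^ j)⁻¹ :=
    Metric.ball_mem_nhds x₀ (by positivity)
  filter_upwards [(hS.and htime).prod_mk hspace] with ⟨t, x⟩ ⟨⟨hSt, ht⟩, hx⟩
  have hxN : |x| ≤ N := by
    have h1 : (2 ^ j : ℝ)⁻¹ ≤ 1 := inv_le_one_of_one_le₀ (one_le_pow₀ one_le_two)
    linarith [abs_sub_abs_le_abs_sub x x₀]
  have hlim := abs_le.1 (hSt.abs_dyadicDensity_sub_dyadicDeriv_le hρ₀ hρ₁ hxN j)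
  have hlim₀ := abs_le.1 (hS₀.abs_dyadicDensity_sub_dyadicDeriv_le hρ₀ hρ₁ hx₀ j)
  have hjump := abs_le.1 (hSt.abs_dyadicDensity_sub_le hρ₀ hxN hx₀ hx)
  have htime' : |dyadicDensity (μ t) j x₀ - dyadicDensity (μ t₀) j x₀| < ε / 2 := ht
  have hsum : S * ρ ^ j / (1 - ρ) * 2 + S * ρ ^ j < ε / 2 :=
    lt_of_eq_of_lt (by ring) hj
  rw [Real.dist_eq]
  rw [abs_lt] at htime' ⊢
  constructor <;> linarith [hlim.1, hlim.2, hlim₀.1, hlim₀.2, hjump.1, hjump.2, htime'.1, htime'.2]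

end DyadicDensity

section OccupationMeasure

/-- The occupation measure of the path `w` up to time `t`: the time `w` spends in a set. -/
noncomputable def occupationMeasure (w : ℝ → ℝ) (t : ℝ) : Measure ℝ :=
  (volume.restrict (Icc 0 t)).map w

instance (w : ℝ → ℝ) (t : ℝ) : IsFiniteMeasure (occupationMeasure w t) :=
  Measure.isFiniteMeasure_map _ _

/-- The local time of the path `w` at level `x` up to time `t`, as a dyadic derivative of the
occupation measure. -/
noncomputable def localTime (w : ℝ → ℝ) (t x : ℝ) : ℝ :=
  dyadicDeriv (occupationMeasure w t) x

variable {w : ℝ → ℝ} {A : Set ℝ}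

lemma occupationMeasure_eq_lintegral (hw : Measurable w) (hA : MeasurableSet A) (t : ℝ) :
    occupationMeasure w t A = ∫⁻ s in Icc 0 t, A.indicator (fun _ => 1) (w s) := by
  rw [← lintegral_indicator_one hA, occupationMeasure,
    lintegral_map (measurable_one.indicator hA) hw]
  rfl

lemma occupationMeasure_real_eq_integral (hw : Measurable w) (hA : MeasurableSet A) {t : ℝ}
    (ht : 0 ≤ t) : (occupationMeasure w t).real A = ∫ s in 0..t, A.indicator 1 (w s) := by
  rw [intervalIntegral.integral_of_le ht, ← integral_Icc_eq_integral_Ioc,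
    ← integral_indicator_one hA, occupationMeasure,
    integral_map hw.aemeasurable (measurable_one.indicator hA).aestronglyMeasurable]

lemma lipschitzWith_occupationMeasure_real (hw : Measurable w) (hA : MeasurableSet A) :
    LipschitzWith 1 fun t => (occupationMeasure w t).real A := by
  have hreal (t : ℝ) : (occupationMeasure w t).real A = volume.real (w ⁻¹' A ∩ Icc 0 t) := by
    rw [occupationMeasure, map_measureReal_apply hw hA, measureReal_restrict_apply (hw hA)]
  have hfin (a b : ℝ) : volume (w ⁻¹' A ∩ Icc a b) ≠ ∞ :=
    measure_ne_top_of_subset inter_subset_right measure_Icc_lt_top.ne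
  refine LipschitzWith.of_le_add fun t u => ?_
  rw [hreal, hreal, Real.dist_eq]
  have hsub : w ⁻¹' A ∩ Icc 0 t ⊆ (w ⁻¹' A ∩ Icc 0 u) ∪ Icc u t := by
    rintro s ⟨hsA, hs⟩
    rcases le_total s u with hsu | hus
    · exact Or.inl ⟨hsA, hs.1, hsu⟩
    · exact Or.inr ⟨hus, hs.2⟩
  calc volume.real (w ⁻¹' A ∩ Icc 0 t)
      ≤ volume.real (w ⁻¹' A ∩ Icc 0 u) + volume.real (Icc u t) :=
        (measureReal_mono hsub (measure_union_ne_top (hfin 0 u) measure_Icc_lt_top.ne)).trans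
          (measureReal_union_le _ _)
    _ ≤ volume.real (w ⁻¹' A ∩ Icc 0 u) + |t - u| := by
        rw [Real.volume_real_Icc]
        gcongr
        exact max_le (le_abs_self _) (abs_nonneg _)

lemma abs_cellDensity_occupationMeasure_sub_le (hw : Measurable w) (j : ℕ) (k : ℤ) (t u : ℝ) :
    |cellDensity (occupationMeasure w t) j k - cellDensity (occupationMeasure w u) j k| ≤
      2 ^ j * |t - u| := by
  have h := (lipschitzWith_occupationMeasure_real hw (measurableSet_dyadicCell j k)).dist_le_mul t u
  rw [NNReal.coe_one, one_mul, Real.dist_eq, Real.dist_eq] at h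
  rw [cellDensity, cellDensity, ← mul_sub, abs_mul, abs_of_pos (by positivity : (0 : ℝ) < 2 ^ j)]
  gcongr

lemma measurable_localTime {α : Type*} [MeasurableSpace α] {B : α → ℝ → ℝ}
    (hB : Measurable (Function.uncurry B)) (t x : ℝ) : Measurable fun a => localTime (B a) t x := by
  refine measurable_dyadicDeriv_apply (Measure.measurable_of_measurable_coe _ fun A hA => ?_) x
  have h : (fun a => occupationMeasure (B a) t A) =
      fun a => volume.restrict (Icc 0 t) (Prod.mk a ⁻¹' (Function.uncurry B ⁻¹' A)) := by
    ext a
    exact Measure.map_apply (hB.comp measurable_prodMk_left) hA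
  rw [h]
  exact measurable_measure_prodMk_left (hB hA)

theorem occupationMeasure_eq_withDensity_localTime {ρ : ℝ} (hρ₀ : 0 ≤ ρ) (hρ₁ : ρ < 1)
    (hbound : ∀ N : ℕ, ∃ S, ∀ t ∈ Icc (0 : ℝ) N, HasDyadicJumpBound (occupationMeasure w t) N S ρ)
    {t : ℝ} (ht : 0 ≤ t) :
    occupationMeasure w t = volume.withDensity fun x => ENNReal.ofReal (localTime w t x) := by
  refine eq_withDensity_dyadicDeriv hρ₀ hρ₁ fun N => ?_
  obtain ⟨M, hM⟩ := exists_nat_ge (max t N)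
  obtain ⟨S, hS⟩ := hbound M
  exact ⟨S, (hS t ⟨ht, (le_max_left _ _).trans hM⟩).mono
    (by exact_mod_cast (le_max_right _ _).trans hM)⟩

theorem continuousOn_localTime (hw : Measurable w) {ρ : ℝ} (hρ₀ : 0 ≤ ρ) (hρ₁ : ρ < 1)
    (hbound : ∀ N : ℕ, ∃ S, ∀ t ∈ Icc (0 : ℝ) N, HasDyadicJumpBound (occupationMeasure w t) N S ρ) :
    ContinuousOn (fun p : ℝ × ℝ => localTime w p.1 p.2) (Ici 0 ×ˢ univ) := by
  refine continuousOn_dyadicDeriv (fun j k => ?_) hρ₀ hρ₁ fun t₀ _ N => ?_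
  · exact ((lipschitzWith_occupationMeasure_real hw
      (measurableSet_dyadicCell j k)).continuous.const_mul _).continuousOn
  · obtain ⟨M, hM⟩ := exists_nat_gt (max t₀ N)
    obtain ⟨S, hS⟩ := hbound M
    refine ⟨S, ?_⟩
    filter_upwards [self_mem_nhdsWithin,
      mem_nhdsWithin_of_mem_nhds (Iio_mem_nhds ((le_max_left _ _).trans_lt hM))] with t ht htM
    exact (hS t ⟨ht, htM.le⟩).mono (by exact_mod_cast ((le_max_right _ _).trans_lt hM).le)

end OccupationMeasure

section ParametricIntegrals

lemma measurable_intervalIntegral {α : Type*} [MeasurableSpace α] {f : α → ℝ → ℝ}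
    (hf : Measurable (Function.uncurry f)) {a b : α → ℝ} (ha : Measurable a) (hb : Measurable b) :
    Measurable fun x => ∫ u in a x..b x, f x u := by
  have hIoc {a b : α → ℝ} (ha : Measurable a) (hb : Measurable b) :
      Measurable fun x => ∫ u in Ioc (a x) (b x), f x u := by
    have hset : MeasurableSet {p : α × ℝ | p.2 ∈ Ioc (a p.1) (b p.1)} :=
      (measurableSet_lt (by fun_prop) measurable_snd).inter
        (measurableSet_le measurable_snd (by fun_prop))
    simp only [← integral_indicator measurableSet_Ioc]
    exact (hf.indicator hset).stronglyMeasurable.integral_prod_right'.measurable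
  exact (hIoc ha hb).sub (hIoc hb ha)

lemma intervalIntegrable_of_norm_le {f : ℝ → ℝ} (hf : Measurable f) {M : ℝ} (hM : ∀ u, ‖f u‖ ≤ M)
    (a b : ℝ) : IntervalIntegrable f volume a b :=
  intervalIntegrable_iff.2 <|
    Measure.integrableOn_of_bounded (by simp) hf.aestronglyMeasurable (ae_of_all _ hM)

theorem intervalIntegral_pow_succ {h : ℝ → ℝ} {a b : ℝ} (hh : IntervalIntegrable h volume a b)
    (n : ℕ) :
    (∫ s in a..b, h s) ^ (n + 1) = (n + 1) * ∫ s in a..b, h s * (∫ u in s..b, h u) ^ n := by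
  set f : ℝ → ℝ := fun s => ∫ u in s..b, h u with hf
  have hf_neg : f = fun s => -∫ u in b..s, h u := funext fun s => intervalIntegral.integral_symm b s
  have hac : AbsolutelyContinuousOnInterval f a b := by
    rw [hf_neg]
    exact (hh.absolutelyContinuousOnInterval_intervalIntegral (by simp)).neg
  have hac_pow : AbsolutelyContinuousOnInterval (fun s => f s ^ (n + 1)) a b := by
    induction n with
    | zero => simpa using hac
    | succ m ih => simpa [pow_succ] using ih.fun_mul hac
  have hderiv : ∀ᵐ s, s ∈ uIoc a b →
      deriv (fun s => f s ^ (n + 1)) s = -((n + 1) * (h s * f s ^ n)) := by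
    filter_upwards [hh.ae_hasDerivAt_integral] with s hs hsab
    have hfs : HasDerivAt f (-h s) s := by
      rw [hf_neg]
      exact (hs (uIoc_subset_uIcc hsab) b (by simp)).neg
    rw [(hfs.fun_pow (n + 1)).deriv]
    push_cast
    ring_nf
  have hftc := hac_pow.integral_deriv_eq_sub
  rw [intervalIntegral.integral_congr_ae hderiv, intervalIntegral.integral_neg,
    intervalIntegral.integral_const_mul] at hftc
  simp only [hf, intervalIntegral.integral_same, zero_pow (Nat.succ_ne_zero n)] at hftc ⊢
  linarith

theorem integral_intervalIntegral_swap_of_norm_le {Ω : Type*} [MeasurableSpace Ω] {P : Measure Ω}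
    [IsFiniteMeasure P] {f : Ω → ℝ → ℝ} (hf : Measurable (Function.uncurry f)) {a b C : ℝ}
    (hab : a ≤ b) (hC : ∀ ω, ∀ s ∈ Ioc a b, ‖f ω s‖ ≤ C) :
    ∫ ω, (∫ s in a..b, f ω s) ∂P = ∫ s in a..b, ∫ ω, f ω s ∂P := by
  simp only [intervalIntegral.integral_of_le hab]
  refine integral_integral_swap (Integrable.of_bound hf.aestronglyMeasurable C ?_)
  filter_upwards [Measure.quasiMeasurePreserving_snd.ae
    (ae_restrict_mem (μ := volume) (measurableSet_Ioc (a := a) (b := b)))] with q hq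
  exact hC q.1 q.2 hq

end ParametricIntegrals

section Independence

lemma integral_comp_eq_integral_integral_of_indepFun {Ω β γ : Type*} [MeasurableSpace Ω]
    [MeasurableSpace β] [MeasurableSpace γ] {P : Measure Ω} [IsProbabilityMeasure P] {Z : Ω → β}
    {G : Ω → γ} (hZ : Measurable Z) (hG : Measurable G) (hind : IndepFun Z G P) {F : β × γ → ℝ}
    (hF : Measurable F) {C : ℝ} (hC : ∀ q, ‖F q‖ ≤ C) :
    ∫ ω, F (Z ω, G ω) ∂P = ∫ y, ∫ ω, F (y, G ω) ∂P ∂(P.map Z) := by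
  have := Measure.isProbabilityMeasure_map (μ := P) hZ.aemeasurable
  have := Measure.isProbabilityMeasure_map (μ := P) hG.aemeasurable
  calc ∫ ω, F (Z ω, G ω) ∂P
      = ∫ q, F q ∂(P.map fun ω => (Z ω, G ω)) :=
        (integral_map (hZ.prodMk hG).aemeasurable hF.aestronglyMeasurable).symm
    _ = ∫ y, ∫ v, F (y, v) ∂(P.map G) ∂(P.map Z) := by
        rw [(indepFun_iff_map_prod_eq_prod_map_map hZ.aemeasurable hG.aemeasurable).1 hind]
        exact integral_prod F (Integrable.of_bound hF.aestronglyMeasurable C (ae_of_all _ hC))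
    _ = ∫ y, ∫ ω, F (y, G ω) ∂P ∂(P.map Z) := integral_congr_ae <| ae_of_all _ fun y =>
        integral_map hG.aemeasurable (hF.comp measurable_prodMk_left).aestronglyMeasurable

-- Taking `m` to be generated by the path after a given time, `F` may depend on that path in any
-- way measurable in `ω`; no measurable structure on a space of paths is needed.
theorem integral_comp_eq_integral_integral_of_indep {Ω β : Type*} {m : MeasurableSpace Ω}
    [mΩ : MeasurableSpace Ω] [mβ : MeasurableSpace β] {P : Measure Ω} [IsProbabilityMeasure P]
    (hm : m ≤ mΩ) {Z : Ω → β} (hZ : Measurable Z) (hind : Indep (mβ.comap Z) m P) {F : β × Ω → ℝ}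
    (hF : Measurable[mβ.prod m] F) {C : ℝ} (hC : ∀ q, ‖F q‖ ≤ C) :
    ∫ ω, F (Z ω, ω) ∂P = ∫ y, ∫ ω, F (y, ω) ∂P ∂(P.map Z) :=
  @integral_comp_eq_integral_integral_of_indepFun Ω β Ω mΩ mβ m P _ Z id hZ (measurable_id'' hm)
    (by change Indep (mβ.comap Z) (m.comap id) P; rwa [MeasurableSpace.comap_id]) F hF C hC

end Independence

section KacMoments

/-- A Brownian motion indexed by `ℝ≥0` with measurable coordinates, all of whose paths (rather than
almost all) are continuous. -/
structure IsContinuousBrownian {Ω : Type*} [MeasurableSpace Ω] (B : ℝ≥0 → Ω → ℝ)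
    (P : Measure Ω) : Prop extends IsPreBrownianReal B P where
  measurable : ∀ t, Measurable (B t)
  continuous : ∀ ω, Continuous fun t => B t ω

/-- The heat kernel: the density at `y` of a Brownian motion at time `s`. -/
noncomputable def heatKernel (s y : ℝ) : ℝ := gaussianPDFReal 0 s.toNNReal y

/-- The integral of `g` up to time `r` along the path `w` started from `x`. -/
noncomputable def additiveFunctional (g : ℝ → ℝ) (w : ℝ≥0 → ℝ) (r x : ℝ) : ℝ :=
  ∫ u in 0..r, g (x + w u.toNNReal)

/-- The `n`-th moment, given by Kac's recursive formula, of the integral of `g` up to time `r` along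
a Brownian motion started from `x`. -/
noncomputable def kacMoment (g : ℝ → ℝ) : ℕ → ℝ → ℝ → ℝ
  | 0 => fun _ _ => 1
  | n + 1 => fun r x =>
      (n + 1) * ∫ s in 0..r, ∫ y, g y * kacMoment g n (r - s) y * heatKernel s (y - x)

lemma measurable_heatKernel : Measurable (Function.uncurry heatKernel) := by
  simp only [Function.uncurry_def, heatKernel, gaussianPDFReal_def]
  fun_prop

variable {g : ℝ → ℝ}

lemma measurable_kacMoment (hg : Measurable g) (n : ℕ) :
    Measurable (Function.uncurry (kacMoment g n)) := by
  induction n with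
  | zero => exact measurable_const
  | succ n ih =>
    have hmoment : Measurable fun a : ((ℝ × ℝ) × ℝ) × ℝ =>
        kacMoment g n (a.1.1.1 - a.1.2) a.2 :=
      ih.comp (f := fun a : ((ℝ × ℝ) × ℝ) × ℝ => (a.1.1.1 - a.1.2, a.2)) (by fun_prop)
    have hkernel : Measurable fun a : ((ℝ × ℝ) × ℝ) × ℝ => heatKernel a.1.2 (a.2 - a.1.1.2) :=
      measurable_heatKernel.comp (f := fun a : ((ℝ × ℝ) × ℝ) × ℝ => (a.1.2, a.2 - a.1.1.2))
        (by fun_prop)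
    have hinner := (((hg.comp measurable_snd).mul hmoment).mul
      hkernel).stronglyMeasurable.integral_prod_right' (ν := (volume : Measure ℝ))
    exact (measurable_intervalIntegral
      (f := fun q s => ∫ y, g y * kacMoment g n (q.1 - s) y * heatKernel s (y - q.2))
      hinner.measurable measurable_const measurable_fst).const_mul _

lemma abs_additiveFunctional_le {M : ℝ} (hM : ∀ y, |g y| ≤ M) (w : ℝ≥0 → ℝ) {r : ℝ} (hr : 0 ≤ r)
    (x : ℝ) : |additiveFunctional g w r x| ≤ M * r := by
  simpa [additiveFunctional, abs_of_nonneg hr] using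
    intervalIntegral.norm_integral_le_of_norm_le_const (a := 0) (b := r)
      (f := fun u : ℝ => g (x + w u.toNNReal)) fun u _ => hM _

/-- The path of `B` after time `s`, restarted from `0`. -/
def shiftedPath {Ω : Type*} (B : ℝ≥0 → Ω → ℝ) (s t : ℝ≥0) (ω : Ω) : ℝ := B (s + t) ω - B s ω

lemma integral_eq_additiveFunctional_shiftedPath {Ω : Type*} (g : ℝ → ℝ) (B : ℝ≥0 → Ω → ℝ)
    {s r : ℝ} (hs : 0 ≤ s) (hsr : s ≤ r) (x : ℝ) (ω : Ω) :
    ∫ u in s..r, g (x + B u.toNNReal ω) =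
      additiveFunctional g (fun t => shiftedPath B s.toNNReal t ω) (r - s)
        (x + B s.toNNReal ω) := by
  have hshift := intervalIntegral.integral_comp_add_left (a := 0) (b := r - s)
    (fun u : ℝ => g (x + B u.toNNReal ω)) s
  rw [add_zero, add_sub_cancel] at hshift
  rw [← hshift]
  refine intervalIntegral.integral_congr fun u hu => ?_
  rw [uIcc_of_le (sub_nonneg.2 hsr)] at hu
  simp only [shiftedPath, Real.toNNReal_add hs hu.1, add_add_sub_cancel]

section Measurability

variable {α : Type*} [MeasurableSpace α] {B : ℝ≥0 → α → ℝ}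

lemma measurable_comp_path (hg : Measurable g) (hBm : ∀ t, Measurable (B t))
    (hBc : ∀ a, Continuous fun t => B t a) :
    Measurable fun q : (ℝ × α) × ℝ => g (q.1.1 + B q.2.toNNReal q.1.2) :=
  hg.comp <| (measurable_fst.comp measurable_fst).add <|
    (measurable_uncurry_of_continuous_of_measurable hBc hBm).comp
      (f := fun q : (ℝ × α) × ℝ => (q.2.toNNReal, q.1.2)) (by fun_prop)

lemma measurable_additiveFunctional (hg : Measurable g) (hBm : ∀ t, Measurable (B t))
    (hBc : ∀ a, Continuous fun t => B t a) (r : ℝ) :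
    Measurable fun q : ℝ × α => additiveFunctional g (fun t => B t q.2) r q.1 :=
  measurable_intervalIntegral (f := fun (q : ℝ × α) u => g (q.1 + B u.toNNReal q.2))
    (measurable_comp_path hg hBm hBc) measurable_const measurable_const

lemma measurable_comp_mul_additiveFunctional_pow (hg : Measurable g) (hBm : ∀ t, Measurable (B t))
    (hBc : ∀ a, Continuous fun t => B t a) (r x : ℝ) (n : ℕ) :
    Measurable fun q : ℝ × α =>
      g (x + q.1) * additiveFunctional g (fun t => B t q.2) r (x + q.1) ^ n := by
  have hadd := (measurable_additiveFunctional hg hBm hBc r).comp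
    (f := fun q : ℝ × α => (x + q.1, q.2)) (by fun_prop)
  exact (hg.comp (measurable_fst.const_add x)).mul (hadd.pow_const n)

lemma measurable_comp_mul_integral_pow (hg : Measurable g) (hBm : ∀ t, Measurable (B t))
    (hBc : ∀ a, Continuous fun t => B t a) (r x : ℝ) (n : ℕ) :
    Measurable fun q : α × ℝ =>
      g (x + B q.2.toNNReal q.1) * (∫ u in q.2..r, g (x + B u.toNNReal q.1)) ^ n := by
  have hpath : Measurable fun q : α × ℝ => g (x + B q.2.toNNReal q.1) :=
    (measurable_comp_path hg hBm hBc).comp (f := fun q : α × ℝ => ((x, q.1), q.2)) (by fun_prop)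
  refine hpath.mul (Measurable.pow_const (measurable_intervalIntegral
    (f := fun (q : α × ℝ) u => g (x + B u.toNNReal q.1)) ?_ measurable_snd measurable_const) n)
  exact hpath.comp (f := fun q : (α × ℝ) × ℝ => (q.1.1, q.2)) (by fun_prop)

end Measurability

namespace IsContinuousBrownian

variable {Ω : Type*} [MeasurableSpace Ω] {P : Measure Ω} {B : ℝ≥0 → Ω → ℝ}

lemma shift (hB : IsContinuousBrownian B P) (s : ℝ≥0) :
    IsContinuousBrownian (shiftedPath B s) P where
  toIsPreBrownianReal := hB.toIsPreBrownianReal.shift s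
  measurable t := (hB.measurable _).sub (hB.measurable _)
  continuous ω := by
    have := hB.continuous ω
    unfold shiftedPath
    fun_prop

lemma integral_comp_eval (hB : IsContinuousBrownian B P) {s : ℝ} (hs : 0 < s) (f : ℝ → ℝ) (x : ℝ) :
    ∫ y, f (x + y) ∂(P.map (B s.toNNReal)) = ∫ y, f y * heatKernel s (y - x) := by
  rw [(hB.hasLaw_eval s.toNNReal).map_eq,
    integral_gaussianReal_eq_integral_smul (by simpa using hs),
    ← integral_add_left_eq_self (fun y => f y * heatKernel s (y - x)) x]
  simp only [heatKernel, smul_eq_mul, add_sub_cancel_left, mul_comm]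

variable [IsProbabilityMeasure P]

theorem integral_comp_shift (hB : IsContinuousBrownian B P) (s : ℝ≥0) {F : ℝ × Ω → ℝ}
    (hF : Measurable[(inferInstance : MeasurableSpace ℝ).prod
      (MeasurableSpace.pi.comap fun ω t => shiftedPath B s t ω)] F)
    {C : ℝ} (hC : ∀ q, ‖F q‖ ≤ C) :
    ∫ ω, F (B s ω, ω) ∂P = ∫ y, ∫ ω, F (y, ω) ∂P ∂(P.map (B s)) := by
  have hind : IndepFun (fun ω t => shiftedPath B s t ω) (B s) P :=
    (hB.indepFun_shift s).comp measurable_id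
      (measurable_pi_apply (⟨s, Set.mem_Iic.2 le_rfl⟩ : Set.Iic s))
  exact integral_comp_eq_integral_integral_of_indep
    (measurable_pi_lambda _ (hB.shift s).measurable).comap_le (hB.measurable s)
    ((IndepFun_iff_Indep _ _ _).1 hind.symm) hF hC

lemma integral_comp_mul_pow_integral (hB : IsContinuousBrownian B P) (hg : Measurable g) {M : ℝ}
    (hM : ∀ y, |g y| ≤ M) {n : ℕ} {s r : ℝ} (hs : 0 < s) (hsr : s ≤ r) {K : ℝ → ℝ}
    (hK : ∀ y, ∫ ω, additiveFunctional g (fun t => shiftedPath B s.toNNReal t ω) (r - s) y ^ n ∂P =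
      K y) (x : ℝ) :
    ∫ ω, g (x + B s.toNNReal ω) * (∫ u in s..r, g (x + B u.toNNReal ω)) ^ n ∂P =
      ∫ y, g y * K y * heatKernel s (y - x) := by
  set Y := shiftedPath B s.toNNReal
  have hM₀ : 0 ≤ M := (abs_nonneg _).trans (hM 0)
  let F : ℝ × Ω → ℝ := fun q =>
    g (x + q.1) * additiveFunctional g (fun t => Y t q.2) (r - s) (x + q.1) ^ n
  have hF : Measurable[(inferInstance : MeasurableSpace ℝ).prod
      (MeasurableSpace.pi.comap fun ω t => Y t ω)] F :=
    @measurable_comp_mul_additiveFunctional_pow _ Ω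
      (MeasurableSpace.pi.comap fun ω t => Y t ω) Y hg
      (fun t => (measurable_pi_apply t).comp (comap_measurable fun ω t => Y t ω))
      (hB.shift _).continuous _ x n
  have hC (q) : ‖F q‖ ≤ M * (M * (r - s)) ^ n := by
    rw [Real.norm_eq_abs, abs_mul, abs_pow]
    gcongr
    · exact hM _
    · exact abs_additiveFunctional_le hM _ (sub_nonneg.2 hsr) _
  calc ∫ ω, g (x + B s.toNNReal ω) * (∫ u in s..r, g (x + B u.toNNReal ω)) ^ n ∂P
      = ∫ ω, F (B s.toNNReal ω, ω) ∂P := by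
        simp only [integral_eq_additiveFunctional_shiftedPath g B hs.le hsr]; rfl
    _ = ∫ y, g (x + y) * K (x + y) ∂(P.map (B s.toNNReal)) := by
        simp only [hB.integral_comp_shift _ hF hC, F, integral_const_mul, hK]
    _ = ∫ y, g y * K y * heatKernel s (y - x) :=
        hB.integral_comp_eval hs (fun y => g y * K y) x

theorem integral_additiveFunctional_pow (hB : IsContinuousBrownian B P) (hg : Measurable g) {M : ℝ}
    (hM : ∀ y, |g y| ≤ M) (n : ℕ) {r : ℝ} (hr : 0 ≤ r) (x : ℝ) :
    ∫ ω, additiveFunctional g (fun t => B t ω) r x ^ n ∂P = kacMoment g n r x := by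
  induction n generalizing B r x with
  | zero => simp [kacMoment]
  | succ n ih =>
    have hM₀ : 0 ≤ M := (abs_nonneg _).trans (hM 0)
    have hpath (ω : Ω) : Measurable fun u : ℝ => g (x + B u.toNNReal ω) :=
      (measurable_comp_path hg hB.measurable hB.continuous).comp
        (f := fun u : ℝ => ((x, ω), u)) (by fun_prop)
    simp only [additiveFunctional, kacMoment]
    simp only [fun ω => intervalIntegral_pow_succ
      (intervalIntegrable_of_norm_le (hpath ω) (fun _ => hM _) 0 r) n, integral_const_mul]
    congr 1
    rw [integral_intervalIntegral_swap_of_norm_le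
      (measurable_comp_mul_integral_pow hg hB.measurable hB.continuous r x n) hr
      (C := M * (M * r) ^ n)]
    · refine intervalIntegral.integral_congr_ae (ae_of_all _ fun s hs => ?_)
      rw [uIoc_of_le hr] at hs
      exact hB.integral_comp_mul_pow_integral hg hM hs.1 hs.2
        (fun y => ih (hB.shift _) (sub_nonneg.2 hs.2) y) x
    · intro ω s hs
      rw [integral_eq_additiveFunctional_shiftedPath g B hs.1.le hs.2,
        Real.norm_eq_abs, abs_mul, abs_pow]
      gcongr
      · exact hM _
      · refine (abs_additiveFunctional_le hM _ (sub_nonneg.2 hs.2) _).trans ?_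
        gcongr
        linarith [hs.1]

end IsContinuousBrownian

end KacMoments

section KacMomentBound

lemma abs_exp_neg_sq_sub_le (a b : ℝ) : |Real.exp (-a ^ 2) - Real.exp (-b ^ 2)| ≤ |a - b| := by
  have hderiv (x : ℝ) :
      HasDerivAt (fun a : ℝ => Real.exp (-a ^ 2)) (Real.exp (-x ^ 2) * (-(2 * x))) x := by
    simpa using (hasDerivAt_pow 2 x).neg.exp
  have hbound (x : ℝ) : ‖Real.exp (-x ^ 2) * (-(2 * x))‖ ≤ 1 := by
    rw [norm_mul, Real.norm_eq_abs, Real.norm_eq_abs, Real.abs_exp, abs_neg, Real.exp_neg,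
      inv_mul_le_iff₀ (Real.exp_pos _), mul_one]
    refine le_trans (abs_le.2 ⟨?_, ?_⟩) (Real.add_one_le_exp (x ^ 2))
    · linarith [sq_nonneg (x + 1)]
    · linarith [sq_nonneg (x - 1)]
  simpa using convex_univ.norm_image_sub_le_of_norm_hasDerivWithin_le
    (fun x _ => (hderiv x).hasDerivWithinAt) (fun x _ => hbound x) (mem_univ b) (mem_univ a)

lemma abs_exp_neg_sq_sub_le_sqrt (a b : ℝ) :
    |Real.exp (-a ^ 2) - Real.exp (-b ^ 2)| ≤ √|a - b| := by
  have hle_one : |Real.exp (-a ^ 2) - Real.exp (-b ^ 2)| ≤ 1 :=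
    abs_sub_le_of_nonneg_of_le (Real.exp_nonneg _)
      (Real.exp_le_one_iff.2 (neg_nonpos.2 (sq_nonneg a))) (Real.exp_nonneg _)
      (Real.exp_le_one_iff.2 (neg_nonpos.2 (sq_nonneg b)))
  refine Real.le_sqrt_of_sq_le ((pow_le_of_le_one (abs_nonneg _) hle_one two_ne_zero).trans ?_)
  exact abs_exp_neg_sq_sub_le a b

lemma heatKernel_eq {s : ℝ} (hs : 0 < s) (y : ℝ) :
    heatKernel s y = (√(2 * Real.pi * s))⁻¹ * Real.exp (-(y / √(2 * s)) ^ 2) := by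
  simp only [heatKernel, gaussianPDFReal_def, Real.coe_toNNReal s hs.le, sub_zero]
  rw [div_pow, Real.sq_sqrt (by positivity), neg_div]

lemma inv_sqrt_two_pi_mul_le_s1 {s : ℝ} (hs : 0 < s) :
    (√(2 * Real.pi * s))⁻¹ ≤ s ^ (-(1 / 2) : ℝ) := by
  rw [Real.rpow_neg hs.le, ← Real.sqrt_eq_rpow]
  gcongr
  nlinarith [Real.pi_gt_three]

lemma abs_heatKernel_le {s : ℝ} (hs : 0 < s) (y : ℝ) : |heatKernel s y| ≤ s ^ (-(1 / 2) : ℝ) := by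
  rw [heatKernel_eq hs, abs_of_nonneg (by positivity)]
  refine (mul_le_of_le_one_right (by positivity) ?_).trans (inv_sqrt_two_pi_mul_le_s1 hs)
  exact Real.exp_le_one_iff.2 (neg_nonpos.2 (sq_nonneg _))

lemma abs_heatKernel_sub_le {s : ℝ} (hs : 0 < s) (y z : ℝ) :
    |heatKernel s y - heatKernel s z| ≤ s ^ (-(3 / 4) : ℝ) * √|y - z| := by
  have hscale : √|y / √(2 * s) - z / √(2 * s)| ≤ s ^ (-(1 / 4) : ℝ) * √|y - z| := by
    have hroot : s ^ (1 / 4 : ℝ) = √√s := by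
      rw [Real.sqrt_eq_rpow, Real.sqrt_eq_rpow, ← Real.rpow_mul hs.le]; norm_num
    rw [← sub_div, abs_div, Real.sqrt_div (abs_nonneg _), div_eq_inv_mul, Real.rpow_neg hs.le,
      abs_of_nonneg (Real.sqrt_nonneg _), hroot]
    gcongr
    linarith
  calc |heatKernel s y - heatKernel s z|
      = (√(2 * Real.pi * s))⁻¹ *
          |Real.exp (-(y / √(2 * s)) ^ 2) - Real.exp (-(z / √(2 * s)) ^ 2)| := by
        rw [heatKernel_eq hs, heatKernel_eq hs, ← mul_sub, abs_mul, abs_of_nonneg (by positivity)]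
    _ ≤ s ^ (-(1 / 2) : ℝ) * (s ^ (-(1 / 4) : ℝ) * √|y - z|) := by
        gcongr
        · exact inv_sqrt_two_pi_mul_le_s1 hs
        · exact (abs_exp_neg_sq_sub_le_sqrt _ _).trans hscale
    _ = s ^ (-(3 / 4) : ℝ) * √|y - z| := by
        rw [← mul_assoc, ← Real.rpow_add hs]; norm_num

/-- A time-integrable majorant of both the supremum and the `1 / 2`-Hölder constant of the heat
kernel at time `s`. -/
noncomputable def heatKernelBound (s : ℝ) : ℝ := s ^ (-(1 / 2) : ℝ) + s ^ (-(3 / 4) : ℝ)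

lemma heatKernelBound_nonneg {s : ℝ} (hs : 0 ≤ s) : 0 ≤ heatKernelBound s :=
  add_nonneg (Real.rpow_nonneg hs _) (Real.rpow_nonneg hs _)

lemma intervalIntegrable_heatKernelBound (a b : ℝ) :
    IntervalIntegrable heatKernelBound volume a b :=
  (intervalIntegral.intervalIntegrable_rpow' (by norm_num)).add
    (intervalIntegral.intervalIntegrable_rpow' (by norm_num))

/-- `F` is bounded by `A` and `1 / 2`-Hölder with constant `H`. -/
structure HasHalfHolderBound (F : ℝ → ℝ) (A H : ℝ) : Prop where
  abs_le : ∀ y, |F y| ≤ A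
  abs_sub_le : ∀ y z, |F y - F z| ≤ H * √|y - z|

lemma hasHalfHolderBound_heatKernel {s : ℝ} (hs : 0 < s) :
    HasHalfHolderBound (heatKernel s) (heatKernelBound s) (heatKernelBound s) where
  abs_le y := (abs_heatKernel_le hs y).trans
    (le_add_of_nonneg_right (Real.rpow_nonneg hs.le _))
  abs_sub_le y z := (abs_heatKernel_sub_le hs y z).trans <|
    mul_le_mul_of_nonneg_right (le_add_of_nonneg_left (Real.rpow_nonneg hs.le _))
      (Real.sqrt_nonneg _)

namespace HasHalfHolderBound

variable {F G : ℝ → ℝ} {A A' H H' : ℝ}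

lemma bound_nonneg (hF : HasHalfHolderBound F A H) : 0 ≤ A := (abs_nonneg _).trans (hF.abs_le 0)

lemma mono (hF : HasHalfHolderBound F A H) (hA : A ≤ A') (hH : H ≤ H') :
    HasHalfHolderBound F A' H' where
  abs_le y := (hF.abs_le y).trans hA
  abs_sub_le y z := (hF.abs_sub_le y z).trans (by gcongr)

lemma continuous (hF : HasHalfHolderBound F A H) : Continuous F := by
  refine continuous_iff_continuousAt.2 fun z => tendsto_iff_dist_tendsto_zero.2 <|
    squeeze_zero (fun _ => dist_nonneg) (fun y => hF.abs_sub_le y z) ?_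
  have hcont : Continuous fun y => H * √|y - z| := by fun_prop
  simpa using hcont.tendsto z

lemma comp_sub_right (hF : HasHalfHolderBound F A H) (x : ℝ) :
    HasHalfHolderBound (fun y => F (y - x)) A H where
  abs_le y := hF.abs_le (y - x)
  abs_sub_le y z := by simpa using hF.abs_sub_le (y - x) (z - x)

lemma mul (hF : HasHalfHolderBound F A H) (hG : HasHalfHolderBound G A' H') :
    HasHalfHolderBound (fun y => F y * G y) (A * A') (A * H' + A' * H) where
  abs_le y := by
    rw [abs_mul]
    exact mul_le_mul (hF.abs_le y) (hG.abs_le y) (abs_nonneg _) hF.bound_nonneg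
  abs_sub_le y z := calc
    |F y * G y - F z * G z| = |F y * (G y - G z) + G z * (F y - F z)| := by ring_nf
    _ ≤ |F y| * |G y - G z| + |G z| * |F y - F z| := by
      rw [← abs_mul, ← abs_mul]; exact abs_add_le _ _
    _ ≤ A * (H' * √|y - z|) + A' * (H * √|y - z|) := by
      have := hF.bound_nonneg
      have := hG.bound_nonneg
      gcongr
      exacts [hF.abs_le y, hG.abs_sub_le y z, hG.abs_le z, hF.abs_sub_le y z]
    _ = (A * H' + A' * H) * √|y - z| := by ring

end HasHalfHolderBound

/-- The difference of the uniform probability densities on the adjacent intervals `[a, a + ε)` and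
`[a + ε, a + 2ε)`. -/
noncomputable def blockDifference (ε a y : ℝ) : ℝ :=
  ε⁻¹ * ((Ico a (a + ε)).indicator 1 y - (Ico (a + ε) (a + ε + ε)).indicator 1 y)

lemma measurable_blockDifference (ε a : ℝ) : Measurable (blockDifference ε a) :=
  ((measurable_one.indicator measurableSet_Ico).sub
    (measurable_one.indicator measurableSet_Ico)).const_mul _

section BlockDifference

variable {ε : ℝ} {F : ℝ → ℝ}

lemma abs_blockDifference_le (hε : 0 < ε) (a y : ℝ) : |blockDifference ε a y| ≤ ε⁻¹ := by
  rw [blockDifference, abs_mul, abs_of_pos (inv_pos.2 hε)]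
  refine mul_le_of_le_one_right (by positivity) ?_
  by_cases h₁ : y ∈ Ico a (a + ε) <;> by_cases h₂ : y ∈ Ico (a + ε) (a + ε + ε) <;> simp [h₁, h₂]

lemma blockDifference_mul (ε a : ℝ) (F : ℝ → ℝ) (y : ℝ) :
    blockDifference ε a y * F y =
      ε⁻¹ * ((Ico a (a + ε)).indicator F y - (Ico (a + ε) (a + ε + ε)).indicator F y) := by
  rw [blockDifference, mul_assoc, sub_mul, ← indicator_mul_left, ← indicator_mul_left]
  simp only [Pi.one_apply, one_mul]

lemma integrable_indicator_Ico (hF : Continuous F) (a b : ℝ) :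
    Integrable ((Ico a b).indicator F) :=
  (hF.integrableOn_Icc.mono_set Ico_subset_Icc_self).integrable_indicator measurableSet_Ico

lemma integrable_blockDifference_mul (hF : Continuous F) (ε a : ℝ) :
    Integrable fun y => blockDifference ε a y * F y := by
  simp only [blockDifference_mul]
  exact ((integrable_indicator_Ico hF _ _).sub (integrable_indicator_Ico hF _ _)).const_mul _

lemma integral_blockDifference_mul (hF : Continuous F) (hε : 0 < ε) (a : ℝ) :
    ∫ y, blockDifference ε a y * F y = ε⁻¹ * ∫ y in a..a + ε, F y - F (y + ε) := by
  simp only [blockDifference_mul]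
  have hshift : ∫ y in a..a + ε, F (y + ε) = ∫ y in a + ε..a + ε + ε, F y :=
    intervalIntegral.integral_comp_add_right F ε
  rw [integral_const_mul, integral_sub (integrable_indicator_Ico hF _ _)
      (integrable_indicator_Ico hF _ _), integral_indicator measurableSet_Ico,
    integral_indicator measurableSet_Ico, integral_Ico_eq_integral_Ioc,
    integral_Ico_eq_integral_Ioc, ← intervalIntegral.integral_of_le (by linarith),
    ← intervalIntegral.integral_of_le (by linarith), ← hshift,
    ← intervalIntegral.integral_sub (hF.intervalIntegrable _ _)
      (Continuous.intervalIntegrable (by fun_prop) _ _)]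

lemma abs_integral_blockDifference_mul_le (hF : Continuous F) (hε : 0 < ε) (a : ℝ) {M : ℝ}
    (hM : ∀ y, |F y - F (y + ε)| ≤ M) : |∫ y, blockDifference ε a y * F y| ≤ M := by
  rw [integral_blockDifference_mul hF hε, abs_mul, abs_of_pos (inv_pos.2 hε), inv_mul_le_iff₀ hε,
    mul_comm]
  simpa [abs_of_pos hε] using intervalIntegral.norm_integral_le_of_norm_le_const (a := a)
    (b := a + ε) (f := fun y => F y - F (y + ε)) fun y _ => hM y

end BlockDifference

section OneStep

variable {F : ℝ → ℝ} {A H ε s : ℝ}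

lemma abs_integral_blockDifference_mul_heatKernel_le (hF : HasHalfHolderBound F A H) (hε : 0 < ε)
    (hs : 0 < s) (a x : ℝ) :
    |∫ y, blockDifference ε a y * F y * heatKernel s (y - x)| ≤
      (A + H) * √ε * heatKernelBound s := by
  have hprod := hF.mul ((hasHalfHolderBound_heatKernel hs).comp_sub_right x)
  simp only [mul_assoc (blockDifference _ _ _)]
  refine abs_integral_blockDifference_mul_le hprod.continuous hε a fun y => ?_
  refine (hprod.abs_sub_le y (y + ε)).trans_eq ?_
  rw [sub_add_cancel_left, abs_neg, abs_of_pos hε]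
  ring

lemma abs_integral_blockDifference_mul_heatKernel_sub_le (hF : HasHalfHolderBound F A H)
    (hε : 0 < ε) (hs : 0 < s) (a x z : ℝ) :
    |(∫ y, blockDifference ε a y * F y * heatKernel s (y - x)) -
        ∫ y, blockDifference ε a y * F y * heatKernel s (y - z)| ≤
      2 * A * √|x - z| * heatKernelBound s := by
  have hkernel (x : ℝ) := (hasHalfHolderBound_heatKernel hs).comp_sub_right x
  have hcont (x : ℝ) := (hF.mul (hkernel x)).continuous
  have hbound (y : ℝ) : |F y * heatKernel s (y - x) - F y * heatKernel s (y - z)| ≤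
      A * (heatKernelBound s * √|x - z|) := by
    have hholder := (hasHalfHolderBound_heatKernel hs).abs_sub_le (y - x) (y - z)
    rw [sub_sub_sub_cancel_left, abs_sub_comm z x] at hholder
    rw [← mul_sub, abs_mul]
    exact mul_le_mul (hF.abs_le y) hholder (abs_nonneg _) hF.bound_nonneg
  simp only [mul_assoc (blockDifference _ _ _)]
  rw [← integral_sub (integrable_blockDifference_mul (hcont x) ε a)
    (integrable_blockDifference_mul (hcont z) ε a)]
  simp only [← mul_sub (blockDifference _ _ _)]
  refine abs_integral_blockDifference_mul_le ((hcont x).sub (hcont z)) hε a fun y => ?_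
  exact ((abs_sub _ _).trans (add_le_add (hbound y) (hbound (y + ε)))).trans_eq (by ring)

end OneStep

lemma abs_intervalIntegral_le_of_abs_le_heatKernelBound {f : ℝ → ℝ} {D r T : ℝ} (hr : r ∈ Icc 0 T)
    (hD : 0 ≤ D) (hf : ∀ s ∈ Ioc 0 r, |f s| ≤ D * heatKernelBound s) :
    |∫ s in 0..r, f s| ≤ D * ∫ s in 0..T, heatKernelBound s := by
  calc |∫ s in 0..r, f s| ≤ ∫ s in 0..r, D * heatKernelBound s :=
        intervalIntegral.norm_integral_le_of_norm_le (f := f) hr.1 (ae_of_all _ hf)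
          ((intervalIntegrable_heatKernelBound 0 r).const_mul D)
    _ = D * ∫ s in 0..r, heatKernelBound s := intervalIntegral.integral_const_mul _ _
    _ ≤ D * ∫ s in 0..T, heatKernelBound s := by
        gcongr
        refine intervalIntegral.integral_mono_interval le_rfl hr.1 hr.2 ?_
          (intervalIntegrable_heatKernelBound 0 T)
        filter_upwards [ae_restrict_mem measurableSet_Ioc] with s hs
        exact heatKernelBound_nonneg hs.1.le

lemma measurable_kacMoment_integrand {g : ℝ → ℝ} (hg : Measurable g) (n : ℕ) (r x : ℝ) :
    Measurable fun s => ∫ y, g y * kacMoment g n (r - s) y * heatKernel s (y - x) := by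
  have hmoment : Measurable fun q : ℝ × ℝ => kacMoment g n (r - q.1) q.2 :=
    (measurable_kacMoment hg n).comp (f := fun q : ℝ × ℝ => (r - q.1, q.2)) (by fun_prop)
  have hkernel : Measurable fun q : ℝ × ℝ => heatKernel q.1 (q.2 - x) :=
    measurable_heatKernel.comp (f := fun q : ℝ × ℝ => (q.1, q.2 - x)) (by fun_prop)
  exact (((hg.comp measurable_snd).mul hmoment).mul
    hkernel).stronglyMeasurable.integral_prod_right'.measurable

lemma hasHalfHolderBound_kacMoment_succ {ε a T A H : ℝ} {n : ℕ} (hε : 0 < ε) (hH : 0 ≤ H)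
    (hn : ∀ r ∈ Icc 0 T, HasHalfHolderBound (kacMoment (blockDifference ε a) n r) A H)
    {r : ℝ} (hr : r ∈ Icc 0 T) :
    HasHalfHolderBound (kacMoment (blockDifference ε a) (n + 1) r)
      ((n + 1) * ((A + H) * √ε * ∫ s in 0..T, heatKernelBound s))
      ((n + 1) * (2 * A * ∫ s in 0..T, heatKernelBound s)) := by
  have hA : 0 ≤ A := (hn r hr).bound_nonneg
  have hF {s : ℝ} (hs : s ∈ Ioc 0 r) := hn (r - s) ⟨sub_nonneg.2 hs.2, by linarith [hs.1, hr.2]⟩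
  have hstep (x : ℝ) : ∀ s ∈ Ioc 0 r, |∫ y, blockDifference ε a y *
      kacMoment (blockDifference ε a) n (r - s) y * heatKernel s (y - x)| ≤
      (A + H) * √ε * heatKernelBound s := fun s hs =>
    abs_integral_blockDifference_mul_heatKernel_le (hF hs) hε hs.1 a x
  have hint (x : ℝ) : IntervalIntegrable (fun s => ∫ y, blockDifference ε a y *
      kacMoment (blockDifference ε a) n (r - s) y * heatKernel s (y - x)) volume 0 r := by
    have hmeas := measurable_kacMoment_integrand (measurable_blockDifference ε a) n r x
    refine ((intervalIntegrable_heatKernelBound 0 r).const_mul ((A + H) * √ε)).mono_fun'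
      hmeas.aestronglyMeasurable ?_
    rw [uIoc_of_le hr.1]
    filter_upwards [ae_restrict_mem measurableSet_Ioc] with s hs using hstep x s hs
  constructor
  · intro x
    rw [kacMoment, abs_mul, abs_of_nonneg (by positivity)]
    gcongr
    exact abs_intervalIntegral_le_of_abs_le_heatKernelBound hr (by positivity) (hstep x)
  · intro x z
    rw [kacMoment, ← mul_sub, abs_mul, abs_of_nonneg (by positivity), mul_assoc,
      ← intervalIntegral.integral_sub (hint x) (hint z)]
    gcongr
    refine (abs_intervalIntegral_le_of_abs_le_heatKernelBound (D := 2 * A * √|x - z|) hr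
      (by positivity) fun s hs => ?_).trans_eq (by ring)
    exact abs_integral_blockDifference_mul_heatKernel_sub_le (hF hs) hε hs.1 a x z

-- Two steps of Kac's recursion gain one factor `√ε`: one step uses the Hölder bound to gain it in
-- the supremum, the next transfers it to the Hölder constant.
theorem exists_hasHalfHolderBound_kacMoment {T : ℝ} (hT : 0 ≤ T) (n : ℕ) :
    ∃ C, 0 ≤ C ∧ ∀ ε ∈ Ioc (0 : ℝ) 1, ∀ a, ∀ r ∈ Icc 0 T,
      HasHalfHolderBound (kacMoment (blockDifference ε a) n r)
        (C * √ε ^ ((n + 1) / 2)) (C * √ε ^ (n / 2)) := by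
  induction n with
  | zero =>
    exact ⟨1, zero_le_one, fun ε _ a r _ => ⟨by simp [kacMoment], by simp [kacMoment]⟩⟩
  | succ n ih =>
    obtain ⟨C, hC, hn⟩ := ih
    set c := ∫ s in 0..T, heatKernelBound s
    have hc : 0 ≤ c := intervalIntegral.integral_nonneg hT fun s hs => heatKernelBound_nonneg hs.1
    refine ⟨(n + 1) * (2 * c * C), by positivity, fun ε hε a r hr => ?_⟩
    refine (hasHalfHolderBound_kacMoment_succ hε.1 (by positivity) (hn ε hε a) hr).mono ?_
      (by linarith)
    have hpow : √ε ^ ((n + 1) / 2) ≤ √ε ^ (n / 2) :=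
      pow_le_pow_of_le_one (Real.sqrt_nonneg _) (Real.sqrt_le_one.2 hε.2) (by omega)
    calc (n + 1) * ((C * √ε ^ ((n + 1) / 2) + C * √ε ^ (n / 2)) * √ε * c)
        ≤ (n + 1) * ((C * √ε ^ (n / 2) + C * √ε ^ (n / 2)) * √ε * c) := by gcongr
      _ = (n + 1) * (2 * c * C) * √ε ^ ((n + 1 + 1) / 2) := by
        rw [show (n + 1 + 1) / 2 = n / 2 + 1 by omega, pow_succ]
        ring

end KacMomentBound

section AlmostSureJumpBound

lemma ae_exists_forall_le_of_integral_le_geometric {Ω : Type*} [MeasurableSpace Ω] {P : Measure Ω}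
    {V : ℕ → Ω → ℝ} (hV₀ : ∀ j ω, 0 ≤ V j ω) (hV : ∀ j, Integrable (V j) P) {C q : ℝ}
    (hq₀ : 0 ≤ q) (hq₁ : q < 1) (hbound : ∀ j, ∫ ω, V j ω ∂P ≤ C * q ^ j) :
    ∀ᵐ ω ∂P, ∃ S, ∀ j, V j ω ≤ S := by
  have hmeas (j : ℕ) : AEMeasurable (fun ω => ENNReal.ofReal (V j ω)) P :=
    (hV j).aemeasurable.ennreal_ofReal
  have hgeom : Summable fun j => C * q ^ j := (summable_geometric_of_lt_one hq₀ hq₁).mul_left C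
  have hfinite : ∫⁻ ω, ∑' j, ENNReal.ofReal (V j ω) ∂P ≠ ∞ := by
    rw [lintegral_tsum hmeas]
    refine ne_top_of_le_ne_top hgeom.tsum_ofReal_ne_top (ENNReal.tsum_le_tsum fun j => ?_)
    rw [← ofReal_integral_eq_lintegral_ofReal (hV j) (ae_of_all _ (hV₀ j))]
    exact ENNReal.ofReal_le_ofReal (hbound j)
  filter_upwards [ae_lt_top' (AEMeasurable.tsum hmeas) hfinite] with ω hω
  refine ⟨(∑' j, ENNReal.ofReal (V j ω)).toReal, fun j => ?_⟩
  rw [← ENNReal.ofReal_le_iff_le_toReal hω.ne]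
  exact ENNReal.le_tsum j

theorem ae_exists_forall_abs_le_of_moment_le {Ω ι : Type*} [MeasurableSpace Ω] {P : Measure Ω}
    {X : ℕ → ι → Ω → ℝ} {G : ℕ → Finset ι} {m : ℕ} (hm : m ≠ 0)
    (hX : ∀ j, ∀ p ∈ G j, Integrable (fun ω => |X j p ω| ^ m) P) {C q K b ρ : ℝ}
    (hC : 0 ≤ C) (hq : 0 ≤ q) (hb : 0 ≤ b) (hρ : 0 < ρ) (hbqρ : b * q < ρ ^ m)
    (hmoment : ∀ j, ∀ p ∈ G j, ∫ ω, |X j p ω| ^ m ∂P ≤ C * q ^ j)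
    (hcard : ∀ j, ((G j).card : ℝ) ≤ K * b ^ j) :
    ∀ᵐ ω ∂P, ∃ S, ∀ j, ∀ p ∈ G j, |X j p ω| ≤ S * ρ ^ j := by
  let V (j : ℕ) (ω : Ω) : ℝ := ∑ p ∈ G j, |X j p ω| ^ m / (ρ ^ m) ^ j
  have hterm (j : ℕ) (p : ι) (ω : Ω) : 0 ≤ |X j p ω| ^ m / (ρ ^ m) ^ j := by positivity
  have hint (j : ℕ) : ∀ p ∈ G j, Integrable (fun ω => |X j p ω| ^ m / (ρ ^ m) ^ j) P :=
    fun p hp => (hX j p hp).div_const _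
  have hV (j : ℕ) : ∫ ω, V j ω ∂P ≤ K * C * (b * q / ρ ^ m) ^ j := calc
    ∫ ω, V j ω ∂P = ∑ p ∈ G j, (∫ ω, |X j p ω| ^ m ∂P) / (ρ ^ m) ^ j := by
      simp only [V, integral_finsetSum _ (hint j), integral_div]
    _ ≤ ∑ _p ∈ G j, C * q ^ j / (ρ ^ m) ^ j :=
      Finset.sum_le_sum fun p hp => by gcongr; exact hmoment j p hp
    _ = (G j).card * (C * q ^ j / (ρ ^ m) ^ j) := by rw [Finset.sum_const, nsmul_eq_mul]
    _ ≤ K * b ^ j * (C * q ^ j / (ρ ^ m) ^ j) := by gcongr; exact hcard j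
    _ = K * C * (b * q / ρ ^ m) ^ j := by rw [div_pow, mul_pow]; ring
  filter_upwards [ae_exists_forall_le_of_integral_le_geometric
    (fun j ω => Finset.sum_nonneg fun p _ => hterm j p ω)
    (fun j => integrable_finsetSum _ (hint j)) (by positivity)
    ((div_lt_one (by positivity)).2 hbqρ) hV] with ω ⟨S, hS⟩
  refine ⟨max S 1, fun j p hp => ?_⟩
  have hterm_le : |X j p ω| ^ m / (ρ ^ m) ^ j ≤ max S 1 :=
    ((Finset.single_le_sum (fun p _ => hterm j p ω) hp).trans (hS j)).trans (le_max_left _ _)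
  rw [div_le_iff₀ (by positivity), ← pow_mul, mul_comm m j, pow_mul] at hterm_le
  refine le_of_pow_le_pow_left₀ hm (by positivity) (hterm_le.trans ?_)
  rw [mul_pow]
  gcongr
  exact le_self_pow₀ (le_max_right _ _) hm

/-- The pairs `(k, i)` indexing the dyadic cells `k` of level `j` starting in `[-N, N]` and the
times `i / 4 ^ j` in `[0, N]`. The time mesh is the square of the space mesh. -/
noncomputable def spaceTimeGrid (N j : ℕ) : Finset (ℤ × ℕ) :=
  Finset.Icc (-(N * 2 ^ j : ℤ)) (N * 2 ^ j) ×ˢ Finset.range (N * 4 ^ j + 1)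

lemma mem_spaceTimeGrid {N j : ℕ} {p : ℤ × ℕ} :
    p ∈ spaceTimeGrid N j ↔ |p.1| ≤ N * 2 ^ j ∧ p.2 ≤ N * 4 ^ j := by
  simp [spaceTimeGrid, abs_le]

lemma card_spaceTimeGrid_le (N j : ℕ) :
    ((spaceTimeGrid N j).card : ℝ) ≤ (2 * N + 1) * (N + 1) * 8 ^ j := by
  have hcard : (spaceTimeGrid N j).card = (2 * (N * 2 ^ j) + 1) * (N * 4 ^ j + 1) := by
    rw [spaceTimeGrid, Finset.card_product, Int.card_Icc, Finset.card_range]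
    congr 1
    zify
    have hpos : (0 : ℤ) ≤ N * 2 ^ j := by positivity
    rw [Int.toNat_of_nonneg (by linarith)]
    ring
  have h2 : (1 : ℝ) ≤ 2 ^ j := one_le_pow₀ one_le_two
  have h4 : (1 : ℝ) ≤ 4 ^ j := one_le_pow₀ (by norm_num)
  calc ((spaceTimeGrid N j).card : ℝ) = (2 * (N * 2 ^ j) + 1) * (N * 4 ^ j + 1) := by
        rw [hcard]; push_cast; ring
    _ ≤ ((2 * N + 1) * 2 ^ j) * ((N + 1) * 4 ^ j) := by gcongr <;> linarith
    _ = (2 * N + 1) * (N + 1) * 8 ^ j := by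
        rw [show (8 : ℝ) = 2 * 4 by norm_num, mul_pow]; ring

lemma abs_sub_floor_div_le {t c : ℝ} (ht : 0 ≤ t) (hc : 0 < c) : |t - ⌊t * c⌋₊ / c| ≤ c⁻¹ := by
  have hfloor : |t * c - ⌊t * c⌋₊| ≤ 1 := by
    rw [abs_of_nonneg (sub_nonneg.2 (Nat.floor_le (by positivity)))]
    linarith [Nat.lt_floor_add_one (t * c)]
  rw [← mul_div_cancel_right₀ t hc.ne', ← sub_div, abs_div, abs_of_pos hc,
    mul_div_cancel_right₀ t hc.ne', inv_eq_one_div]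
  gcongr

section Path

variable {w : ℝ → ℝ}

lemma abs_dyadicJump_occupationMeasure_sub_le (hw : Measurable w) (j : ℕ) (k : ℤ) (t u : ℝ) :
    |dyadicJump (occupationMeasure w t) j k - dyadicJump (occupationMeasure w u) j k| ≤
      2 * (2 ^ j * |t - u|) := by
  have h₀ := abs_le.1 (abs_cellDensity_occupationMeasure_sub_le hw j k t u)
  have h₁ := abs_le.1 (abs_cellDensity_occupationMeasure_sub_le hw j (k + 1) t u)
  rw [dyadicJump, dyadicJump, abs_le]
  constructor <;> linarith [h₀.1, h₀.2, h₁.1, h₁.2]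

lemma hasDyadicJumpBound_of_spaceTimeGrid (hw : Measurable w) {N : ℕ} {S ρ : ℝ} (hρ : 1 / 2 ≤ ρ)
    (hgrid : ∀ j, ∀ p ∈ spaceTimeGrid N j,
      |dyadicJump (occupationMeasure w (p.2 / 4 ^ j)) j p.1| ≤ S * ρ ^ j)
    {t : ℝ} (ht : t ∈ Icc (0 : ℝ) N) :
    HasDyadicJumpBound (occupationMeasure w t) N (S + 2) ρ := by
  intro j k hk
  set i := ⌊t * 4 ^ j⌋₊
  have hi : i ≤ N * 4 ^ j := Nat.floor_le_of_le (by push_cast; gcongr; exact ht.2)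
  have htime : 2 ^ j * |t - i / 4 ^ j| ≤ ρ ^ j := calc
    2 ^ j * |t - i / 4 ^ j| ≤ 2 ^ j * (4 ^ j)⁻¹ := by
      gcongr
      exact abs_sub_floor_div_le ht.1 (by positivity)
    _ = (1 / 2) ^ j := by rw [← inv_pow, ← mul_pow]; norm_num
    _ ≤ ρ ^ j := by gcongr
  have hspace := abs_dyadicJump_occupationMeasure_sub_le hw j k t (i / 4 ^ j)
  have hnode := hgrid j (k, i) (mem_spaceTimeGrid.2 ⟨hk, hi⟩)
  have htri := abs_sub_abs_le_abs_sub (dyadicJump (occupationMeasure w t) j k)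
    (dyadicJump (occupationMeasure w (i / 4 ^ j)) j k)
  linarith

lemma dyadicJump_occupationMeasure (hw : Measurable w) (j : ℕ) (k : ℤ) {t : ℝ} (ht : 0 ≤ t) :
    dyadicJump (occupationMeasure w t) j k =
      ∫ s in 0..t, blockDifference (2 ^ j)⁻¹ (k / 2 ^ j) (w s) := by
  have hint (k : ℤ) : IntervalIntegrable (fun s => (dyadicCell j k).indicator (1 : ℝ → ℝ) (w s))
      volume 0 t :=
    intervalIntegrable_of_norm_le
      ((measurable_one.indicator (measurableSet_dyadicCell j k)).comp hw) (M := 1)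
      (fun s => (norm_indicator_le_norm_self _ _).trans (by simp)) 0 t
  have hblock (y : ℝ) : blockDifference (2 ^ j)⁻¹ (k / 2 ^ j) y =
      2 ^ j * ((dyadicCell j k).indicator 1 y - (dyadicCell j (k + 1)).indicator 1 y) := by
    rw [blockDifference, inv_inv, dyadicCell_eq_Ico, dyadicCell_eq_Ico, Int.cast_add, Int.cast_one,
      add_div, one_div]
  simp only [hblock, dyadicJump, cellDensity,
    occupationMeasure_real_eq_integral hw (measurableSet_dyadicCell _ _) ht]
  rw [intervalIntegral.integral_const_mul, intervalIntegral.integral_sub (hint k) (hint (k + 1)),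
    mul_sub]

end Path

namespace IsContinuousBrownian

variable {Ω : Type*} [MeasurableSpace Ω] {P : Measure Ω} {B : ℝ≥0 → Ω → ℝ}

lemma measurable_path (hB : IsContinuousBrownian B P) (ω : Ω) :
    Measurable fun s : ℝ => B s.toNNReal ω :=
  ((hB.continuous ω).comp continuous_real_toNNReal).measurable

lemma dyadicJump_eq_additiveFunctional (hB : IsContinuousBrownian B P) (j : ℕ) (k : ℤ) {t : ℝ}
    (ht : 0 ≤ t) (ω : Ω) :
    dyadicJump (occupationMeasure (fun s => B s.toNNReal ω) t) j k =
      additiveFunctional (blockDifference (2 ^ j)⁻¹ (k / 2 ^ j)) (fun t => B t ω) t 0 := by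
  simp only [dyadicJump_occupationMeasure (hB.measurable_path ω) j k ht, additiveFunctional,
    zero_add]

variable [IsProbabilityMeasure P]

lemma integrable_dyadicJump_pow (hB : IsContinuousBrownian B P) (n j : ℕ) (k : ℤ) {t : ℝ}
    (ht : 0 ≤ t) :
    Integrable (fun ω => dyadicJump (occupationMeasure (fun s => B s.toNNReal ω) t) j k ^ n) P := by
  have hbound := abs_blockDifference_le (ε := (2 ^ j)⁻¹) (by positivity) (k / 2 ^ j)
  have hmeas := measurable_additiveFunctional
    (measurable_blockDifference (2 ^ j)⁻¹ (k / 2 ^ j)) hB.measurable hB.continuous t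
  simp only [hB.dyadicJump_eq_additiveFunctional j k ht]
  refine Integrable.of_bound
    ((hmeas.comp measurable_prodMk_left).pow_const n).aestronglyMeasurable
    (((2 ^ j)⁻¹⁻¹ * t) ^ n) (ae_of_all _ fun ω => ?_)
  rw [norm_pow]
  exact pow_le_pow_left₀ (norm_nonneg _) (abs_additiveFunctional_le hbound _ ht 0) n

lemma exists_integral_dyadicJump_pow_le (hB : IsContinuousBrownian B P) (n : ℕ) {T : ℝ}
    (hT : 0 ≤ T) :
    ∃ C, 0 ≤ C ∧ ∀ (j : ℕ) (k : ℤ), ∀ t ∈ Icc 0 T,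
      ∫ ω, dyadicJump (occupationMeasure (fun s => B s.toNNReal ω) t) j k ^ (4 * n) ∂P ≤
        C * ((2 ^ n)⁻¹) ^ j := by
  obtain ⟨C, hC, hmoment⟩ := exists_hasHalfHolderBound_kacMoment hT (4 * n)
  refine ⟨C, hC, fun j k t ht => ?_⟩
  have hε : ((2 : ℝ) ^ j)⁻¹ ∈ Ioc 0 1 :=
    ⟨by positivity, inv_le_one_of_one_le₀ (one_le_pow₀ one_le_two)⟩
  have hsqrt : √((2 ^ j)⁻¹) ^ ((4 * n + 1) / 2) = (((2 : ℝ) ^ n)⁻¹) ^ j := by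
    rw [show (4 * n + 1) / 2 = 2 * n by omega, pow_mul, Real.sq_sqrt hε.1.le, inv_pow, inv_pow,
      ← pow_mul, ← pow_mul, mul_comm]
  simp only [hB.dyadicJump_eq_additiveFunctional j k ht.1]
  rw [hB.integral_additiveFunctional_pow (measurable_blockDifference _ _)
    (abs_blockDifference_le hε.1 _) _ ht.1, ← hsqrt]
  exact (le_abs_self _).trans ((hmoment _ hε _ t ht).abs_le 0)

theorem ae_exists_hasDyadicJumpBound (hB : IsContinuousBrownian B P) :
    ∀ᵐ ω ∂P, ∀ N : ℕ, ∃ S, ∀ t ∈ Icc (0 : ℝ) N,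
      HasDyadicJumpBound (occupationMeasure (fun s => B s.toNNReal ω) t) N S (99 / 100) := by
  rw [ae_all_iff]
  intro N
  -- The grid has about `8 ^ j` points and the sixteenth moments decay like `16 ^ (-j)`, so that any
  -- ratio `ρ < 1` with `8 / 16 < ρ ^ 16` will do.
  obtain ⟨C, hC, hmoment⟩ := hB.exists_integral_dyadicJump_pow_le 4 (T := N) (by positivity)
  have htime {j : ℕ} {p : ℤ × ℕ} (hp : p ∈ spaceTimeGrid N j) :
      (p.2 / 4 ^ j : ℝ) ∈ Icc (0 : ℝ) N :=
    ⟨by positivity, (div_le_iff₀ (by positivity)).2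
      (by exact_mod_cast (mem_spaceTimeGrid.1 hp).2)⟩
  have heven : Even 16 := by decide
  filter_upwards [ae_exists_forall_abs_le_of_moment_le
    (X := fun j p ω => dyadicJump (occupationMeasure (fun s => B s.toNNReal ω) (p.2 / 4 ^ j)) j p.1)
    (G := spaceTimeGrid N) (m := 16) (by norm_num)
    (fun j p hp => by
      simpa only [heven.pow_abs] using hB.integrable_dyadicJump_pow 16 j p.1 (htime hp).1)
    hC (q := (2 ^ 4)⁻¹) (b := 8) (ρ := 99 / 100) (by positivity) (by norm_num) (by norm_num)
    (by norm_num)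
    (fun j p hp => by simpa only [heven.pow_abs] using hmoment j p.1 _ (htime hp))
    (card_spaceTimeGrid_le N)] with ω ⟨S, hS⟩
  exact ⟨S + 2, fun t ht =>
    hasDyadicJumpBound_of_spaceTimeGrid (hB.measurable_path ω) (by norm_num) hS ht⟩

end IsContinuousBrownian

end AlmostSureJumpBound

namespace IsBrownianMotion

variable {Ω : Type*} [MeasurableSpace Ω] {P : Measure Ω} {W : ℝ → Ω → ℝ}

lemma isPreBrownianReal (hW : IsBrownianMotion P W) :
    IsPreBrownianReal (fun (t : ℝ≥0) ω => W t ω) P := by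
  have := hW.isProb
  refine HasIndepIncrements.isPreBrownianReal_of_hasLaw
    (fun t => ⟨(hW.meas t).aemeasurable, ?_⟩) fun n t ht => ?_
  · simpa [hW.init] using hW.incr_law 0 t le_rfl t.2
  · exact hW.indep_incr n (fun i => t i) (fun i j hij => NNReal.coe_le_coe.2 (ht hij)) (t 0).2

lemma exists_isContinuousBrownian (hW : IsBrownianMotion P W) :
    ∃ B : ℝ≥0 → Ω → ℝ, IsContinuousBrownian B P ∧ ∀ᵐ ω ∂P, ∀ t, B t ω = W t ω := by
  set Z := toMeasurable P {ω | ¬Continuous fun t => W t ω}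
  have hZ_notMem : ∀ᵐ ω ∂P, ω ∉ Z :=
    measure_eq_zero_iff_ae_notMem.1 ((measure_toMeasurable _).trans (ae_iff.1 hW.cont))
  let B (t : ℝ≥0) : Ω → ℝ := Zᶜ.indicator (W t)
  have hBW {ω : Ω} (hω : ω ∉ Z) (t : ℝ≥0) : B t ω = W t ω := indicator_of_mem hω _
  refine ⟨B, ⟨hW.isPreBrownianReal.congr fun t => ?_, fun t => ?_, fun ω => ?_⟩, ?_⟩
  · filter_upwards [hZ_notMem] with ω hω using (hBW hω t).symm
  · exact (hW.meas t).indicator (measurableSet_toMeasurable _ _).compl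
  · by_cases hω : ω ∈ Z
    · have hzero (t : ℝ≥0) : B t ω = 0 := indicator_of_notMem (notMem_compl_iff.2 hω) _
      simp only [hzero, continuous_const]
    · have hcont : Continuous fun t => W t ω := by
        by_contra h
        exact hω (subset_toMeasurable P _ h)
      simpa only [hBW hω, Function.comp_def] using hcont.comp NNReal.continuous_coe
  · filter_upwards [hZ_notMem] with ω hω using hBW hω

end IsBrownianMotion

/-- Trotter's existence theorem: there is a nonnegative random field `L`,
jointly continuous in `(t, x)` on `[0,∞) × ℝ` for almost every `ω`, such that
almost surely, for every `t ≥ 0` and Borel `B ⊆ ℝ`,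
`∫_0^t 1_B (W_s) ds = ∫_B L_t(x) dx`. -/
theorem trotter_existence_local_time
    {Ω : Type*} [MeasurableSpace Ω] (P : Measure Ω) (W : ℝ → Ω → ℝ)
    (hW : IsBrownianMotion P W) :
    ∃ L : ℝ → ℝ → Ω → ℝ,
      (∀ t x ω, 0 ≤ L t x ω) ∧
      (∀ t x, Measurable fun ω => L t x ω) ∧
      (∀ᵐ ω ∂P, ContinuousOn (fun p : ℝ × ℝ => L p.1 p.2 ω) (Ici 0 ×ˢ univ)) ∧
      (∀ᵐ ω ∂P, ∀ t : ℝ, 0 ≤ t → ∀ B : Set ℝ, MeasurableSet B →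
        ∫⁻ s in Icc (0 : ℝ) t, B.indicator (fun _ => (1 : ℝ≥0∞)) (W s ω) =
          ∫⁻ x in B, ENNReal.ofReal (L t x ω)) := by
  have := hW.isProb
  obtain ⟨B, hB, hBW⟩ := hW.exists_isContinuousBrownian
  have hpath : Measurable (Function.uncurry fun ω (s : ℝ) => B s.toNNReal ω) :=
    (measurable_uncurry_of_continuous_of_measurable hB.continuous hB.measurable).comp
      (f := fun q : Ω × ℝ => (q.2.toNNReal, q.1)) (by fun_prop)
  refine ⟨fun t x ω => localTime (fun s => B s.toNNReal ω) t x,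
    fun t x ω => dyadicDeriv_nonneg _ x, measurable_localTime hpath, ?_, ?_⟩
  · filter_upwards [hB.ae_exists_hasDyadicJumpBound] with ω hω
    exact continuousOn_localTime (hB.measurable_path ω) (by norm_num) (by norm_num) hω
  · filter_upwards [hB.ae_exists_hasDyadicJumpBound, hBW] with ω hω hωW t ht A hA
    rw [← withDensity_apply _ hA,
      ← occupationMeasure_eq_withDensity_localTime (by norm_num) (by norm_num) hω ht,
      occupationMeasure_eq_lintegral (hB.measurable_path ω) hA]
    refine setLIntegral_congr_fun measurableSet_Icc fun s hs => ?_
    simp only [hωW, Real.coe_toNNReal s hs.1]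
end
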